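/- arXiv:1009.0639 — 3 statements merged into one kernel-verified Lean document; each statement's English description precedes it below -/
import Mathlib

section
/- There exists a dense Gδ subset R of P([0,1]^d) (with the weak topology) such that for every measure μ ∈ R and every real number h with 0 ≤ h ≤ d, the level set E_μ(h) is nonempty and its Hausdorff dimension satisfies dim_H E_μ(h) = h. -/
open MeasureTheory Metric Filter Set
open scoped ENNReal NNReal Topology

noncomputable section

/-- The unit cube `[0,1]^d` of `ℝ^d` equipped with the supremum metric,
viewed as a (compact) metric space. -/
abbrev Cube (d : ℕ) : Type := ↥(Set.Icc (0 : Fin d → ℝ) 1)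

/-- The local (lower) dimension `h_μ(x) = liminf_{r → 0⁺} log μ(B(x,r)) / log r`. -/
noncomputable def locDim {d : ℕ} (μ : Measure (Cube d)) (x : Cube d) : EReal :=
  Filter.liminf
    (fun r : ℝ => ENNReal.log (μ (Metric.ball x r)) / (Real.log r : EReal))
    (nhdsWithin 0 (Set.Ioi 0))

/-- The level set `E_μ(h) = {x : h_μ(x) = h}`. -/
def levelSet {d : ℕ} (μ : Measure (Cube d)) (h : ℝ) : Set (Cube d) :=
  {x | locDim μ x = (h : EReal)}

/-- The dyadic cube `I_{j,k} = ∏ᵢ [kᵢ 2^{-j}, (kᵢ+1) 2^{-j})`, as a subset of the cube. -/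
def dyadicCube (d j : ℕ) (k : Fin d → Fin (2 ^ j)) : Set (Cube d) :=
  {x | ∀ i, (k i : ℝ) / 2 ^ j ≤ (x : Fin d → ℝ) i ∧ (x : Fin d → ℝ) i < ((k i : ℝ) + 1) / 2 ^ j}

/-- `s_j(q) = Σ_{Q ∈ G_j, μ(Q) ≠ 0} μ(Q)^q`. -/
def dyadicSum {d : ℕ} (μ : Measure (Cube d)) (q : ℝ) (j : ℕ) : ℝ :=
  ∑ k ∈ Finset.univ.filter (fun k : Fin d → Fin (2 ^ j) => μ (dyadicCube d j k) ≠ 0),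
    (μ (dyadicCube d j k)).toReal ^ q

/-- The `L^q`-spectrum `τ_μ(q) = liminf_j -(1/j) log₂ s_j(q)`. -/
def lqSpectrum {d : ℕ} (μ : Measure (Cube d)) (q : ℝ) : EReal :=
  Filter.liminf
    (fun j : ℕ => ((-(1 / (j : ℝ)) * Real.logb 2 (dyadicSum μ q j) : ℝ) : EReal))
    Filter.atTop

/-!
By the Baire category theorem a typical measure charges infinitely many dyadic grids: at infinitely
many scales `2 ^ (-j)`, tiny balls around all the grid points have almost the mass they would have
for the uniform distribution on the grid. A point which such grids approximate to within
`2 ^ (-α * j)` then has local dimension at most `d / α`. For any measure, the set of points of local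
dimension at most `h` has Hausdorff dimension at most `h`, and those of dimension `< h` form a set
of vanishing `h`-dimensional measure; so it suffices that, for `α = d / h`, the points approximated
at order `α` have positive `h`-dimensional measure. Inserting in the binary digits of all the
coordinates long blocks of zeros, placed at scales where the measure charges the grid, maps the
cube into this set, and the inverse of this map is Hölder of exponent `1 / α`.
-/

section LocalDimension

lemma log_div_log_le_iff {m : ℝ≥0∞} {r t : ℝ} (hr0 : 0 < r) (hr1 : r < 1) :
    ENNReal.log m / (Real.log r : EReal) ≤ t ↔ ENNReal.ofReal (r ^ t) ≤ m := by
  have hlog : Real.log r < 0 := Real.log_neg hr0 hr1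
  have hlog' : (Real.log r : EReal) < 0 := by exact_mod_cast hlog
  have hrt : 0 < r ^ t := Real.rpow_pos_of_pos hr0 t
  rcases eq_or_ne m ⊤ with rfl | htop
  · simp [EReal.top_div_of_neg_ne_bot hlog' (EReal.coe_ne_bot _)]
  rcases eq_or_ne m 0 with rfl | h0
  · simp [EReal.bot_div_of_neg_ne_bot hlog' (EReal.coe_ne_bot _), hrt]
  · rw [ENNReal.log_pos_real h0 htop, ← EReal.coe_div, EReal.coe_le_coe_iff,
      div_le_iff_of_neg hlog, ENNReal.ofReal_le_iff_le_toReal htop,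
      ← Real.log_le_log_iff hrt (ENNReal.toReal_pos h0 htop), Real.log_rpow hr0]

variable {d : ℕ} {μ : Measure (Cube d)} {x : Cube d} {t : ℝ}

lemma frequently_ofReal_rpow_le_of_locDim_lt (h : locDim μ x < t) :
    ∃ᶠ r in 𝓝[>] 0, ENNReal.ofReal (r ^ t) ≤ μ (ball x r) :=
  ((frequently_lt_of_liminf_lt (by isBoundedDefault) h).and_eventually
    (Ioo_mem_nhdsGT zero_lt_one)).mono fun _ hr => (log_div_log_le_iff hr.2.1 hr.2.2).1 hr.1.le

lemma locDim_le_of_frequently_ofReal_rpow_le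
    (h : ∃ᶠ r in 𝓝[>] 0, ENNReal.ofReal (r ^ t) ≤ μ (ball x r)) : locDim μ x ≤ t :=
  liminf_le_of_frequently_le ((h.and_eventually (Ioo_mem_nhdsGT zero_lt_one)).mono
    fun _ hr => (log_div_log_le_iff hr.2.1 hr.2.2).2 hr.1) (by isBoundedDefault)

lemma locDim_nonneg (μ : Measure (Cube d)) [IsFiniteMeasure μ] (x : Cube d) :
    0 ≤ locDim μ x := by
  by_contra! h
  obtain ⟨t, hxt, ht⟩ := EReal.lt_iff_exists_real_btwn.1 h
  have ht : t < 0 := by exact_mod_cast ht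
  have hlarge : ∀ᶠ r : ℝ in 𝓝[>] 0, μ univ < ENNReal.ofReal (r ^ t) :=
    (ENNReal.tendsto_ofReal_atTop.comp (tendsto_rpow_neg_nhdsGT_zero ht)).eventually_const_lt
      (measure_lt_top μ univ)
  obtain ⟨r, hle, hlt⟩ :=
    ((frequently_ofReal_rpow_le_of_locDim_lt hxt).and_eventually hlarge).exists
  exact (hle.trans (measure_mono (subset_univ _))).not_gt hlt

end LocalDimension

section Covering

lemma exists_iUnion_closedBall_cover_tsum_le {X : Type*} [PseudoMetricSpace X] [MeasurableSpace X]
    [OpensMeasurableSpace X] (μ : Measure X) {S : Set X} {r : X → ℝ} {c : X → ℝ≥0∞} {R : ℝ}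
    (hr0 : ∀ x ∈ S, 0 ≤ r x) (hrR : ∀ x ∈ S, r x ≤ R)
    (hc : ∀ x ∈ S, c x ≤ μ (closedBall x (r x))) :
    ∃ u ⊆ S, S ⊆ ⋃ x : u, closedBall (x : X) (5 * r x) ∧ ∑' x : u, c x ≤ μ univ := by
  obtain ⟨u, huS, hdisj, hcov⟩ := Vitali.exists_disjoint_subfamily_covering_enlargement_closedBall
    S id r R hrR 5 (by norm_num)
  refine ⟨u, huS, fun x hx => ?_, ?_⟩
  · obtain ⟨b, hb, hsub⟩ := hcov x hx
    exact mem_iUnion.2 ⟨⟨b, hb⟩, hsub (mem_closedBall_self (hr0 x hx))⟩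
  · calc ∑' x : u, c x ≤ ∑' x : u, μ (closedBall (x : X) (r x)) :=
          ENNReal.tsum_le_tsum fun x => hc x (huS x.2)
      _ ≤ μ univ := tsum_measure_le_measure_univ
          (fun _ => isClosed_closedBall.measurableSet.nullMeasurableSet)
          fun x y hxy => (hdisj x.2 y.2 (Subtype.coe_ne_coe.2 hxy)).aedisjoint

lemma ediam_closedBall_le_ofReal {X : Type*} [PseudoMetricSpace X] (x : X) {r : ℝ}
    (hr : 0 ≤ r) : ediam (closedBall x r) ≤ ENNReal.ofReal (2 * r) := by
  rw [ENNReal.ofReal_mul zero_le_two, ENNReal.ofReal_ofNat, ← closedEBall_ofReal hr]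
  exact ediam_closedEBall_le

lemma exists_countable_cover_of_frequently_ofReal_rpow_le {X : Type*} [PseudoMetricSpace X]
    [MeasurableSpace X] [OpensMeasurableSpace X] (μ : Measure X) [IsFiniteMeasure μ] {S : Set X}
    {t : ℝ} (hS : ∀ x ∈ S, ∃ᶠ r in 𝓝[>] 0, ENNReal.ofReal (r ^ t) ≤ μ (closedBall x r))
    {ε : ℝ} (hε : 0 < ε) :
    ∃ (u : Set X) (r : X → ℝ), u.Countable ∧ (∀ x ∈ u, 0 < r x ∧ r x ≤ ε) ∧
      S ⊆ ⋃ x : u, closedBall (x : X) (5 * r x) ∧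
      ∑' x : u, ENNReal.ofReal (r x ^ t) ≤ μ univ := by
  have hradius : ∀ x, ∃ r : ℝ, x ∈ S →
      0 < r ∧ r ≤ ε ∧ ENNReal.ofReal (r ^ t) ≤ μ (closedBall x r) := fun x => by
    by_cases hx : x ∈ S
    · obtain ⟨r, hμ, hr0, hrε⟩ := ((hS x hx).and_eventually (Ioc_mem_nhdsGT hε)).exists
      exact ⟨r, fun _ => ⟨hr0, hrε, hμ⟩⟩
    · exact ⟨0, fun h => absurd h hx⟩
  choose r hr using hradius
  obtain ⟨u, huS, hcov, hsum⟩ := exists_iUnion_closedBall_cover_tsum_le μ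
    (fun x hx => (hr x hx).1.le) (fun x hx => (hr x hx).2.1) (fun x hx => (hr x hx).2.2)
  have hsupport : Function.support (fun x : u => ENNReal.ofReal (r x ^ t)) = univ :=
    Function.support_eq_univ fun x =>
      (ENNReal.ofReal_pos.2 (Real.rpow_pos_of_pos (hr x (huS x.2)).1 t)).ne'
  have hcount := Summable.countable_support_ennreal (hsum.trans_lt (measure_lt_top μ univ)).ne
  rw [hsupport, countable_univ_iff] at hcount
  exact ⟨u, r, hcount, fun x hx => ⟨(hr x (huS hx)).1, (hr x (huS hx)).2.1⟩, hcov, hsum⟩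

lemma hausdorffMeasure_setOf_frequently_ofReal_rpow_le {X : Type*} [MetricSpace X]
    [MeasurableSpace X] [BorelSpace X] (μ : Measure X) [IsFiniteMeasure μ] {t : ℝ} (ht : 0 ≤ t) :
    μH[t] {x | ∃ᶠ r in 𝓝[>] 0, ENNReal.ofReal (r ^ t) ≤ μ (closedBall x r)} ≤
      ENNReal.ofReal (10 ^ t) * μ univ := by
  choose u r hu hr hcov hsum using fun n : ℕ => exists_countable_cover_of_frequently_ofReal_rpow_le
    (S := {x | ∃ᶠ r in 𝓝[>] 0, ENNReal.ofReal (r ^ t) ≤ μ (closedBall x r)}) μ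
    (fun _ hx => hx) (Nat.one_div_pos_of_nat (n := n))
  have := fun n => (hu n).to_subtype
  have hdiam : ∀ n (x : u n), ediam (closedBall (x : X) (5 * r n x)) ≤
      ENNReal.ofReal (10 * r n x) := fun n x =>
    (ediam_closedBall_le_ofReal _ (by linarith [(hr n x x.2).1])).trans_eq (by ring_nf)
  have hlim : Tendsto (fun n : ℕ => ENNReal.ofReal (10 * (1 / ((n : ℝ) + 1)))) atTop (𝓝 0) := by
    simpa only [mul_zero, ENNReal.ofReal_zero] using
      ENNReal.tendsto_ofReal ((tendsto_one_div_add_atTop_nhds_zero_nat (𝕜 := ℝ)).const_mul 10)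
  refine (Measure.hausdorffMeasure_le_liminf_tsum t _ _ hlim
    (fun n (x : u n) => closedBall (x : X) (5 * r n x))
    (Eventually.of_forall fun n x => (hdiam n x).trans (ENNReal.ofReal_le_ofReal
      (by linarith [(hr n x x.2).2]))) (Eventually.of_forall hcov)).trans
    (liminf_le_of_frequently_le (Frequently.of_forall fun n => ?_) (by isBoundedDefault))
  calc ∑' x : u n, ediam (closedBall (x : X) (5 * r n x)) ^ t
      ≤ ∑' x : u n, ENNReal.ofReal (10 ^ t) * ENNReal.ofReal (r n x ^ t) := by
        refine ENNReal.tsum_le_tsum fun x => (ENNReal.rpow_le_rpow (hdiam n x) ht).trans_eq ?_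
        have hr0 : 0 ≤ r n x := (hr n x x.2).1.le
        rw [ENNReal.ofReal_rpow_of_nonneg (by positivity) ht,
          Real.mul_rpow (by norm_num) hr0, ENNReal.ofReal_mul (by positivity)]
    _ ≤ ENNReal.ofReal (10 ^ t) * μ univ := by
        rw [ENNReal.tsum_mul_left]
        gcongr
        exact hsum n

end Covering

section LevelSets

variable {d : ℕ} (μ : Measure (Cube d)) [IsFiniteMeasure μ]

lemma dimH_setOf_locDim_lt_le {t : ℝ} (ht : 0 ≤ t) :
    dimH {x | locDim μ x < t} ≤ ENNReal.ofReal t := by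
  have hsub : {x | locDim μ x < t} ⊆
      {x | ∃ᶠ r in 𝓝[>] 0, ENNReal.ofReal (r ^ t) ≤ μ (closedBall x r)} := fun x hx =>
    (frequently_ofReal_rpow_le_of_locDim_lt hx).mono fun r hr =>
      hr.trans (measure_mono ball_subset_closedBall)
  refine dimH_le_of_hausdorffMeasure_ne_top (d := t.toNNReal) ?_
  rw [Real.coe_toNNReal t ht]
  have hle := (measure_mono hsub).trans (hausdorffMeasure_setOf_frequently_ofReal_rpow_le μ ht)
  exact (hle.trans_lt (ENNReal.mul_lt_top ENNReal.ofReal_lt_top (measure_lt_top μ univ))).ne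

lemma dimH_levelSet_le {h : ℝ} (hh : 0 ≤ h) : dimH (levelSet μ h) ≤ ENNReal.ofReal h := by
  refine ENNReal.le_of_forall_pos_le_add fun ε hε _ => ?_
  have hsub : levelSet μ h ⊆ {x | locDim μ x < ((h + ε : ℝ) : EReal)} := fun x hx => by
    rw [mem_ofPred_eq, show locDim μ x = h from hx, EReal.coe_lt_coe_iff]
    simpa using hε
  calc dimH (levelSet μ h) ≤ ENNReal.ofReal (h + ε) :=
        (dimH_mono hsub).trans (dimH_setOf_locDim_lt_le μ (by positivity))
    _ = ENNReal.ofReal h + ε := by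
        rw [ENNReal.ofReal_add hh ε.coe_nonneg, ENNReal.ofReal_coe_nnreal]

lemma hausdorffMeasure_setOf_locDim_lt_eq_zero (h : ℝ) : μH[h] {x | locDim μ x < h} = 0 := by
  have hsub : {x | locDim μ x < h} ⊆
      ⋃ q : {q : ℚ // 0 < (q : ℝ) ∧ (q : ℝ) < h}, {x | locDim μ x < ((q : ℝ) : EReal)} := by
    intro x hx
    obtain ⟨q, hxq, hqh⟩ := EReal.exists_rat_btwn_of_lt hx
    have hq := (locDim_nonneg μ x).trans_lt hxq
    exact mem_iUnion.2 ⟨⟨q, by exact_mod_cast hq, by exact_mod_cast hqh⟩, hxq⟩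
  refine measure_mono_null hsub (measure_iUnion_null fun ⟨q, hq0, hqh⟩ => ?_)
  have hdim : dimH {x | locDim μ x < ((q : ℝ) : EReal)} < h.toNNReal :=
    (dimH_setOf_locDim_lt_le μ hq0.le).trans_lt
      ((ENNReal.ofReal_lt_ofReal_iff (hq0.trans hqh)).2 hqh)
  simpa only [Real.coe_toNNReal h (hq0.trans hqh).le] using hausdorffMeasure_of_dimH_lt hdim

lemma levelSet_nonempty_and_dimH_eq {h : ℝ} (hh : 0 ≤ h)
    (hpos : μH[h] {x | locDim μ x ≤ h} ≠ 0) :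
    (levelSet μ h).Nonempty ∧ dimH (levelSet μ h) = ENNReal.ofReal h := by
  have hsub : {x | locDim μ x ≤ h} ⊆ levelSet μ h ∪ {x | locDim μ x < h} := fun _ hx =>
    le_iff_eq_or_lt.1 hx
  have hlevel : μH[h] (levelSet μ h) ≠ 0 := fun h0 => hpos <| measure_mono_null hsub <|
    measure_union_null h0 (hausdorffMeasure_setOf_locDim_lt_eq_zero μ h)
  refine ⟨nonempty_of_measure_ne_zero hlevel, (dimH_levelSet_le μ hh).antisymm ?_⟩
  exact le_dimH_of_hausdorffMeasure_ne_zero (d := h.toNNReal) (by rwa [Real.coe_toNNReal h hh])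

end LevelSets

section Baire

lemma setOf_frequently_mem_eq_iInter {X : Type*} (U : ℕ → Set X) :
    {x | ∃ᶠ j in atTop, x ∈ U j} = ⋂ m, ⋃ j ≥ m, U j := by
  ext x
  simp only [mem_ofPred_eq, frequently_atTop, mem_iInter, mem_iUnion, exists_prop]

variable {X : Type*} [TopologicalSpace X] {U : ℕ → Set X}

lemma isGδ_setOf_frequently_mem (hU : ∀ j, IsOpen (U j)) :
    IsGδ {x | ∃ᶠ j in atTop, x ∈ U j} := by
  rw [setOf_frequently_mem_eq_iInter]
  exact IsGδ.iInter_of_isOpen fun m => isOpen_biUnion fun j _ => hU j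

lemma dense_setOf_frequently_mem [BaireSpace X] (hU : ∀ j, IsOpen (U j))
    (hlim : ∀ x, ∃ u : ℕ → X, Tendsto u atTop (𝓝 x) ∧ ∀ j, u j ∈ U j) :
    Dense {x | ∃ᶠ j in atTop, x ∈ U j} := by
  rw [setOf_frequently_mem_eq_iInter]
  refine dense_iInter_of_isOpen_nat (fun m => isOpen_biUnion fun j _ => hU j) fun m x => ?_
  obtain ⟨u, hu, hmem⟩ := hlim x
  exact mem_closure_of_tendsto hu
    ((eventually_ge_atTop m).mono fun j hj => mem_biUnion hj (hmem j))

end Baire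

section Charging

lemma isOpen_setOf_lt_measure {X : Type*} [MeasurableSpace X] [TopologicalSpace X]
    [OpensMeasurableSpace X] [HasOuterApproxClosed X] (c : ℝ≥0∞) {G : Set X} (hG : IsOpen G) :
    IsOpen {μ : ProbabilityMeasure X | c < (μ : Measure X) G} :=
  isOpen_iff_mem_nhds.2 fun _ hμ => eventually_lt_of_lt_liminf (lt_of_lt_of_le hμ
    (ProbabilityMeasure.le_liminf_measure_open_of_tendsto tendsto_id hG)) (by isBoundedDefault)

lemma exists_probabilityMeasure_inv_card_le {X ι : Type*} [MeasurableSpace X] [Fintype ι]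
    [Nonempty ι] (x : ι → X) : ∃ σ : ProbabilityMeasure X, ∀ i s, x i ∈ s →
      (Fintype.card ι : ℝ≥0∞)⁻¹ ≤ (σ : Measure X) s := by
  have hcard : (Fintype.card ι : ℝ≥0∞) ≠ 0 := by simp
  refine ⟨⟨∑ i, (Fintype.card ι : ℝ≥0∞)⁻¹ • Measure.dirac (x i), ⟨?_⟩⟩, fun i s hi => ?_⟩
  · simp [ENNReal.mul_inv_cancel hcard]
  · simp only [ProbabilityMeasure.coe_mk, Measure.coe_finsetSum, Finset.sum_apply,
      Measure.smul_apply, smul_eq_mul]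
    refine le_trans ?_ (Finset.single_le_sum (fun _ _ => zero_le) (Finset.mem_univ i))
    rw [Measure.dirac_apply_of_mem hi, mul_one]

lemma exists_tendsto_nhds_mul_le {X α : Type*} [MeasurableSpace X] [TopologicalSpace X]
    [OpensMeasurableSpace X] {l : Filter α} (ν : ProbabilityMeasure X)
    (σ : α → ProbabilityMeasure X) {t : α → ℝ≥0} (ht1 : ∀ a, t a ≤ 1) (ht : Tendsto t l (𝓝 0)) :
    ∃ κ : α → ProbabilityMeasure X, Tendsto κ l (𝓝 ν) ∧
      ∀ a s, t a * (σ a : Measure X) s ≤ (κ a : Measure X) s := by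
  have hmass : ∀ a, IsProbabilityMeasure
      ((1 - t a) • (ν : Measure X) + t a • (σ a : Measure X)) := fun a => ⟨by
    simp only [Measure.add_apply, Measure.smul_apply, measure_univ, ENNReal.smul_def, smul_eq_mul,
      mul_one]
    exact_mod_cast tsub_add_cancel_of_le (ht1 a)⟩
  let κ : α → ProbabilityMeasure X := fun a => ⟨_, hmass a⟩
  refine ⟨κ, ?_, fun a s => ?_⟩
  · have hν : Tendsto (fun a => (1 - t a) • ν.toFiniteMeasure) l (𝓝 ν.toFiniteMeasure) := by
      simpa using (tendsto_const_nhds (x := (1 : ℝ≥0)).sub ht).smul_const ν.toFiniteMeasure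
    have hσ : Tendsto (fun a => t a • (σ a).toFiniteMeasure) l (𝓝 0) :=
      FiniteMeasure.tendsto_zero_of_tendsto_zero_mass (ht.congr fun a => by
        simp [FiniteMeasure.mass])
    rw [ProbabilityMeasure.tendsto_nhds_iff_toFiniteMeasure_tendsto_nhds,
      ← add_zero ν.toFiniteMeasure]
    exact (hν.add hσ).congr fun a => Subtype.ext rfl
  · simp only [κ, ProbabilityMeasure.coe_mk, Measure.add_apply, Measure.smul_apply,
      ENNReal.smul_def, smul_eq_mul]
    exact le_add_self

/-- The probability measures giving mass more than `c` to the ball of radius `ρ` around each point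
of the family `x`. -/
def chargingMeasures {X ι : Type*} [PseudoMetricSpace X] [MeasurableSpace X] (x : ι → X) (ρ : ℝ)
    (c : ℝ≥0∞) : Set (ProbabilityMeasure X) :=
  {μ | ∀ i, c < (μ : Measure X) (ball (x i) ρ)}

variable {X : Type*} [PseudoMetricSpace X] [MeasurableSpace X] [OpensMeasurableSpace X]

lemma isOpen_chargingMeasures {ι : Type*} [Finite ι] (x : ι → X) (ρ : ℝ) (c : ℝ≥0∞) :
    IsOpen (chargingMeasures x ρ c) := by
  rw [chargingMeasures, ofPred_forall]
  exact isOpen_iInter_of_finite fun i => isOpen_setOf_lt_measure c isOpen_ball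

lemma exists_tendsto_mem_chargingMeasures {α : Type*} {l : Filter α} {ι : α → Type*}
    [∀ a, Fintype (ι a)] [∀ a, Nonempty (ι a)] (ν : ProbabilityMeasure X) (x : ∀ a, ι a → X)
    {ρ : α → ℝ} (hρ : ∀ a, 0 < ρ a) {c : α → ℝ≥0∞} {t : α → ℝ≥0} (ht1 : ∀ a, t a ≤ 1)
    (ht : Tendsto t l (𝓝 0)) (hc : ∀ a, c a < t a * (Fintype.card (ι a) : ℝ≥0∞)⁻¹) :
    ∃ κ : α → ProbabilityMeasure X, Tendsto κ l (𝓝 ν) ∧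
      ∀ a, κ a ∈ chargingMeasures (x a) (ρ a) (c a) := by
  choose σ hσ using fun a => exists_probabilityMeasure_inv_card_le (x a)
  obtain ⟨κ, hκ, hκσ⟩ := exists_tendsto_nhds_mul_le ν σ ht1 ht
  refine ⟨κ, hκ, fun a i => (hc a).trans_le (le_trans ?_ (hκσ a _))⟩
  gcongr
  exact hσ a i _ (mem_ball_self (hρ a))

end Charging

section TypicalMeasures

/-- The point of the grid of mesh `2 ^ (-j)` in `[0,1]^d` with index `k`. -/
def gridPoint (d j : ℕ) (k : Fin d → Fin (2 ^ j + 1)) : Cube d :=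
  ⟨fun i => (k i : ℝ) / 2 ^ j, fun i => div_nonneg (Nat.cast_nonneg _) (by positivity), fun i =>
    div_le_one_of_le₀ (by simpa using (Nat.cast_le (α := ℝ)).2 (k i).is_le) (by positivity)⟩

/-- The probability measures concentrated near the grid of mesh `2 ^ (-j)`: up to the factor
`1 / (j + 2)`, each of the balls of radius `2 ^ (-j ^ 2)` around the grid points has the mass it
would have for the uniform distribution on the grid. -/
def gridCharging (d j : ℕ) : Set (ProbabilityMeasure (Cube d)) :=
  chargingMeasures (gridPoint d j) ((1 / 2) ^ (j ^ 2)) ((j + 2) * (2 ^ j + 1) ^ d)⁻¹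

/-- The residual set of measures for which the spectrum is computed: the measures charging
infinitely many dyadic grids. -/
def typicalMeasures (d : ℕ) : Set (ProbabilityMeasure (Cube d)) :=
  {μ | ∃ᶠ j in atTop, μ ∈ gridCharging d j}

lemma isOpen_gridCharging (d j : ℕ) : IsOpen (gridCharging d j) :=
  isOpen_chargingMeasures _ _ _

lemma isGδ_typicalMeasures (d : ℕ) : IsGδ (typicalMeasures d) :=
  isGδ_setOf_frequently_mem (isOpen_gridCharging d)

lemma dense_typicalMeasures (d : ℕ) : Dense (typicalMeasures d) := by
  refine dense_setOf_frequently_mem (isOpen_gridCharging d) fun ν =>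
    exists_tendsto_mem_chargingMeasures ν (gridPoint d) (t := fun j => 1 / (j + 1))
      (fun j => by positivity) (fun j => div_le_one_of_le₀ (by simp) (by simp))
      tendsto_one_div_add_atTop_nhds_zero_nat fun j => ?_
  have hinv : ((j + 2 : ℝ≥0∞))⁻¹ < ((1 / (j + 1) : ℝ≥0) : ℝ≥0∞) := by
    rw [one_div, ENNReal.coe_inv (by positivity), ENNReal.inv_lt_inv]
    exact_mod_cast Nat.lt_succ_self (j + 1)
  have hcard : (Fintype.card (Fin d → Fin (2 ^ j + 1)) : ℝ≥0∞) = (2 ^ j + 1) ^ d := by simp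
  rw [hcard, ENNReal.mul_inv (by simp) (by simp)]
  exact ENNReal.mul_lt_mul_left (by simp) (by simp) hinv

end TypicalMeasures

section GridApproximation

lemma tendsto_two_rpow_sub_mul_nhdsGT_zero {α : ℝ} (hα : 0 < α) (b : ℝ) :
    Tendsto (fun j : ℕ => (2 : ℝ) ^ (b - α * j)) atTop (𝓝[>] 0) := by
  refine tendsto_nhdsWithin_iff.2 ⟨?_, Eventually.of_forall fun j => by
    simp only [mem_Ioi]; positivity⟩
  exact (tendsto_rpow_atBot_of_base_gt_one 2 one_lt_two).comp (tendsto_atBot_add_const_left _ b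
    (tendsto_neg_atTop_atBot.comp (tendsto_natCast_atTop_atTop.const_mul_atTop hα)))

lemma eventually_two_rpow_sub_mul_rpow_le_inv {d : ℕ} {t α : ℝ} (h : d < t * α) :
    ∀ᶠ j : ℕ in atTop, ((2 : ℝ) ^ (1 - α * j)) ^ t ≤ ((j + 2 : ℝ) * (2 ^ j + 1) ^ d)⁻¹ := by
  have hq : (2 : ℝ) ^ (d - t * α) < 1 := Real.rpow_lt_one_of_one_lt_of_neg one_lt_two (by linarith)
  have hlim : Tendsto (fun j : ℕ => (2 : ℝ) ^ (d + t) * ((j + 2) * ((2 : ℝ) ^ (d - t * α)) ^ j))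
      atTop (𝓝 0) := by
    simpa [add_mul] using (((tendsto_self_mul_const_pow_of_lt_one (by positivity) hq).add
      ((tendsto_pow_atTop_nhds_zero_of_lt_one (by positivity) hq).const_mul 2)).const_mul
        ((2 : ℝ) ^ (d + t)))
  filter_upwards [hlim.eventually_le_const zero_lt_one] with j hj
  have hexp : ((2 : ℝ) ^ (1 - α * j)) ^ t * (2 ^ (j + 1)) ^ d =
      2 ^ (d + t) * (2 ^ (d - t * α)) ^ j := by
    simp only [← Real.rpow_natCast, ← Real.rpow_mul zero_le_two, ← Real.rpow_add two_pos]
    congr 1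
    push_cast
    ring
  rw [← one_div, le_div_iff₀ (by positivity)]
  calc ((2 : ℝ) ^ (1 - α * j)) ^ t * ((j + 2) * (2 ^ j + 1) ^ d)
      ≤ (2 ^ (1 - α * j)) ^ t * ((j + 2) * (2 ^ (j + 1)) ^ d) := by
        gcongr
        linarith [pow_succ (2 : ℝ) j, one_le_pow₀ (M₀ := ℝ) one_le_two (n := j)]
    _ = 2 ^ (d + t) * ((j + 2) * (2 ^ (d - t * α)) ^ j) := by
        linear_combination ((j : ℝ) + 2) * hexp
    _ ≤ 1 := hj

lemma locDim_le_of_frequently_dist_gridPoint_le {d : ℕ} {μ : ProbabilityMeasure (Cube d)}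
    {x : Cube d} {t α : ℝ} (hα : 0 < α) (ht : d < t * α)
    (hx : ∃ᶠ j in atTop, μ ∈ gridCharging d j ∧
      ∃ k, dist x (gridPoint d j k) ≤ 2 ^ (-(α * j))) :
    locDim (μ : Measure (Cube d)) x ≤ t := by
  refine locDim_le_of_frequently_ofReal_rpow_le ((tendsto_two_rpow_sub_mul_nhdsGT_zero hα
    1).frequently ((hx.and_eventually ((eventually_two_rpow_sub_mul_rpow_le_inv ht).and
      (tendsto_natCast_atTop_atTop.eventually_ge_atTop α))).mono ?_))
  rintro j ⟨⟨hμ, k, hk⟩, hle, hαj⟩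
  have hradius : ((1 : ℝ) / 2) ^ (j ^ 2) ≤ 2 ^ (-(α * j)) := by
    rw [one_div, inv_pow, ← Real.rpow_natCast, ← Real.rpow_neg zero_le_two]
    gcongr
    · exact one_le_two
    · push_cast
      nlinarith
  have hball : ball (gridPoint d j k) ((1 / 2) ^ (j ^ 2)) ⊆ ball x (2 ^ (1 - α * j)) := by
    refine ball_subset_ball' ?_
    rw [dist_comm, sub_eq_add_neg, Real.rpow_add two_pos, Real.rpow_one]
    linarith
  calc ENNReal.ofReal (((2 : ℝ) ^ (1 - α * j)) ^ t)
      ≤ ENNReal.ofReal ((((j + 2) * (2 ^ j + 1) ^ d : ℕ) : ℝ)⁻¹) :=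
        ENNReal.ofReal_le_ofReal (by exact_mod_cast hle)
    _ = ((j + 2) * (2 ^ j + 1) ^ d : ℝ≥0∞)⁻¹ := by
        rw [ENNReal.ofReal_inv_of_pos (by positivity), ENNReal.ofReal_natCast]
        push_cast
        rfl
    _ ≤ (μ : Measure (Cube d)) (ball x (2 ^ (1 - α * j))) := (hμ k).le.trans (measure_mono hball)

end GridApproximation

section Staircase

/-- The step function with jumps at the multiples of the `(M (k + 1))⁻¹`, `k < m`, which replaces
`y` by a weighted sum of its roundings down to these multiples. -/
def stepSum (W M : ℕ → ℝ) (m : ℕ) (y : ℝ) : ℝ :=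
  ∑ k ∈ Finset.range m, (W k - W (k + 1)) * (⌊M (k + 1) * y⌋ / M (k + 1))

/-- The staircase function with weights `W` and scales `M`: for antitone `W` it is the decreasing
limit of the functions `stepSum W M m y + W m * y`, whose slope between jumps is `W m`. -/
def staircase (W M : ℕ → ℝ) (y : ℝ) : ℝ :=
  ⨅ m, stepSum W M m y + W m * y

lemma floor_mul_div_le {c : ℝ} (hc : 0 < c) (y : ℝ) : ⌊c * y⌋ / c ≤ y := by
  rw [div_le_iff₀' hc]
  exact Int.floor_le _

lemma sub_inv_le_floor_mul_div {c : ℝ} (hc : 0 < c) (y : ℝ) : y - c⁻¹ ≤ ⌊c * y⌋ / c := by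
  rw [le_div_iff₀' hc, mul_sub, mul_inv_cancel₀ hc.ne']
  exact (Int.sub_one_lt_floor _).le

variable {W M : ℕ → ℝ}

lemma stepSum_succ (m : ℕ) (y : ℝ) : stepSum W M (m + 1) y =
    stepSum W M m y + (W m - W (m + 1)) * (⌊M (m + 1) * y⌋ / M (m + 1)) :=
  Finset.sum_range_succ _ _

lemma monotone_stepSum (hW : Antitone W) (hM : ∀ n, 0 < M n) (m : ℕ) :
    Monotone (stepSum W M m) := fun y z hyz => by
  refine Finset.sum_le_sum fun k _ => mul_le_mul_of_nonneg_left ?_ (sub_nonneg.2 (hW k.le_succ))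
  have := (hM (k + 1)).le
  gcongr

lemma stepSum_nonneg (hW : Antitone W) (hM : ∀ n, 0 < M n) (m : ℕ) {y : ℝ} (hy : 0 ≤ y) :
    0 ≤ stepSum W M m y := by
  simpa [stepSum] using monotone_stepSum hW hM m hy

lemma antitone_stepSum_add (hW : Antitone W) (hM : ∀ n, 0 < M n) (y : ℝ) :
    Antitone fun m => stepSum W M m y + W m * y := antitone_nat_of_succ_le fun m => by
  rw [stepSum_succ]
  nlinarith [hW m.le_succ, floor_mul_div_le (hM (m + 1)) y]

lemma stepSum_add_floor_mem_Icc (hW : Antitone W) (hW0 : ∀ n, 0 ≤ W n) (hW1 : W 0 ≤ 1)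
    (hM : ∀ n, 0 < M n) {y : ℝ} (hy : y ∈ Icc 0 1) (m : ℕ) :
    stepSum W M m y + W m * (⌊M (m + 1) * y⌋ / M (m + 1)) ∈ Icc 0 1 := by
  have hfloor : (0 : ℝ) ≤ ⌊M (m + 1) * y⌋ := by
    exact_mod_cast Int.floor_nonneg.2 (mul_nonneg (hM _).le hy.1)
  refine ⟨add_nonneg (stepSum_nonneg hW hM m hy.1)
    (mul_nonneg (hW0 m) (div_nonneg hfloor (hM _).le)), ?_⟩
  calc stepSum W M m y + W m * (⌊M (m + 1) * y⌋ / M (m + 1))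
      ≤ stepSum W M m y + W m * y := by
        gcongr
        · exact hW0 m
        · exact floor_mul_div_le (hM _) y
    _ ≤ W 0 * y := by simpa [stepSum] using antitone_stepSum_add hW hM y m.zero_le
    _ ≤ 1 := mul_le_one₀ hW1 hy.1 hy.2

lemma stepSum_add_sub_le (hW : Antitone W) (hM : ∀ n, 0 < M n) (hMmono : Monotone M) (y : ℝ)
    {m n : ℕ} (hmn : m ≤ n) :
    stepSum W M m y + W m * y - (W m - W n) * (M (m + 1))⁻¹ ≤ stepSum W M n y + W n * y := by
  induction n, hmn using Nat.le_induction with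
  | base => simp
  | succ n hmn ih =>
    have hinv : (M (n + 1))⁻¹ ≤ (M (m + 1))⁻¹ := inv_anti₀ (hM _) (hMmono (by omega))
    rw [stepSum_succ]
    nlinarith [hW n.le_succ, sub_inv_le_floor_mul_div (hM (n + 1)) y]

lemma sub_le_stepSum_add (hW : Antitone W) (hW0 : ∀ n, 0 ≤ W n) (hM : ∀ n, 0 < M n)
    (hMmono : Monotone M) (y : ℝ) (m n : ℕ) :
    stepSum W M m y + W m * y - W m * (M (m + 1))⁻¹ ≤ stepSum W M n y + W n * y := by
  have hinv := inv_nonneg.2 (hM (m + 1)).le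
  rcases le_total m n with hmn | hnm
  · nlinarith [stepSum_add_sub_le hW hM hMmono y hmn, hW0 n]
  · nlinarith [antitone_stepSum_add hW hM y hnm, hW0 m]

lemma sub_le_staircase (hW : Antitone W) (hW0 : ∀ n, 0 ≤ W n) (hM : ∀ n, 0 < M n)
    (hMmono : Monotone M) (y : ℝ) (m : ℕ) :
    stepSum W M m y + W m * y - W m * (M (m + 1))⁻¹ ≤ staircase W M y :=
  le_ciInf (sub_le_stepSum_add hW hW0 hM hMmono y m)

lemma staircase_le (hW : Antitone W) (hW0 : ∀ n, 0 ≤ W n) (hM : ∀ n, 0 < M n)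
    (hMmono : Monotone M) (y : ℝ) (m : ℕ) : staircase W M y ≤ stepSum W M m y + W m * y :=
  ciInf_le ⟨_, forall_mem_range.2 (sub_le_stepSum_add hW hW0 hM hMmono y 0)⟩ m

lemma mapsTo_staircase_Icc (hW : Antitone W) (hW0 : ∀ n, 0 ≤ W n) (hW1 : W 0 ≤ 1)
    (hM : ∀ n, 0 < M n) (hMmono : Monotone M) : MapsTo (staircase W M) (Icc 0 1) (Icc 0 1) := by
  refine fun y hy => ⟨le_ciInf fun m => ?_, (staircase_le hW hW0 hM hMmono y 0).trans ?_⟩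
  · exact add_nonneg (stepSum_nonneg hW hM m hy.1) (mul_nonneg (hW0 m) hy.1)
  · simpa [stepSum] using mul_le_one₀ hW1 hy.1 hy.2

lemma mul_half_sub_le_staircase_sub (hW : Antitone W) (hW0 : ∀ n, 0 ≤ W n) (hM : ∀ n, 0 < M n)
    (hMmono : Monotone M) {y z : ℝ} (hyz : y ≤ z) {m : ℕ} (hm : 2 ≤ M (m + 1) * (z - y)) :
    W m * ((z - y) / 2) ≤ staircase W M z - staircase W M y := by
  have hinv : (M (m + 1))⁻¹ ≤ (z - y) / 2 := by
    rw [inv_le_iff_one_le_mul₀' (hM _)]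
    linarith
  nlinarith [sub_le_staircase hW hW0 hM hMmono z m, staircase_le hW hW0 hM hMmono y m,
    monotone_stepSum hW hM m hyz, hW0 m]

/-- The slope of `staircase W M` at distance `δ` is governed by the scale `m` for which `δ` lies
between `2 / M (m + 1)` and `2 / M m`. -/
lemma rpow_le_staircase_sub (hW : Antitone W) (hM : ∀ n, 0 < M n) (hMmono : Monotone M)
    (hM0 : M 0 ≤ 1) (hMtop : Tendsto M atTop atTop) {β : ℝ} (hβ : 0 ≤ β)
    (hWM : ∀ n, M n ^ (-β) ≤ W n) {y z : ℝ} (hyz : y ≤ z) (hz : z ≤ y + 2) :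
    ((z - y) / 2) ^ (β + 1) ≤ staircase W M z - staircase W M y := by
  rcases hyz.eq_or_lt with rfl | hlt
  · simp [Real.zero_rpow (by positivity : β + 1 ≠ 0)]
  have hδ : 0 < z - y := sub_pos.2 hlt
  have hex : ∃ m, 2 ≤ M (m + 1) * (z - y) :=
    (((tendsto_add_atTop_iff_nat 1).2 hMtop).atTop_mul_const hδ |>.eventually_ge_atTop 2).exists
  classical
  obtain ⟨m, hm, hmin⟩ : ∃ m, 2 ≤ M (m + 1) * (z - y) ∧ M m * (z - y) ≤ 2 := by
    refine ⟨Nat.find hex, Nat.find_spec hex, ?_⟩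
    cases hfind : Nat.find hex with
    | zero => nlinarith
    | succ n => exact (not_le.1 (Nat.find_min hex (by omega : n < Nat.find hex))).le
  have hW0 : ∀ n, 0 ≤ W n := fun n => (Real.rpow_nonneg (hM n).le _).trans (hWM n)
  calc ((z - y) / 2) ^ (β + 1) = ((z - y) / 2) ^ β * ((z - y) / 2) :=
        Real.rpow_add_one (by positivity) β
    _ ≤ (M m)⁻¹ ^ β * ((z - y) / 2) := by
        have hle : (z - y) / 2 ≤ (M m)⁻¹ := by
          rw [le_inv_comm₀ (by positivity) (hM m), inv_div, le_div_iff₀ hδ]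
          exact hmin
        gcongr
    _ ≤ W m * ((z - y) / 2) := by
        rw [Real.inv_rpow (hM m).le, ← Real.rpow_neg (hM m).le]
        gcongr
        exact hWM m
    _ ≤ staircase W M z - staircase W M y :=
        mul_half_sub_le_staircase_sub hW hW0 hM hMmono hyz hm

lemma dist_le_two_mul_dist_staircase_rpow (hW : Antitone W) (hM : ∀ n, 0 < M n)
    (hMmono : Monotone M) (hM0 : M 0 ≤ 1) (hMtop : Tendsto M atTop atTop) {β : ℝ} (hβ : 0 ≤ β)
    (hWM : ∀ n, M n ^ (-β) ≤ W n) {y z : ℝ} (hyz : dist y z ≤ 2) :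
    dist y z ≤ 2 * dist (staircase W M y) (staircase W M z) ^ (β + 1)⁻¹ := by
  wlog hle : y ≤ z generalizing y z
  · rw [dist_comm, dist_comm (staircase W M y)]
    exact this (dist_comm y z ▸ hyz) (le_of_not_ge hle)
  rw [dist_comm, Real.dist_eq, abs_of_nonneg (sub_nonneg.2 hle)] at hyz ⊢
  have hslope := rpow_le_staircase_sub hW hM hMmono hM0 hMtop hβ hWM hle (by linarith)
  have hhalf : 0 ≤ (z - y) / 2 := by linarith
  have hdiff := (Real.rpow_nonneg hhalf _).trans hslope
  rw [dist_comm, Real.dist_eq, abs_of_nonneg hdiff]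
  linarith [(Real.le_rpow_inv_iff_of_pos hhalf hdiff (by positivity)).2 hslope]

lemma dist_staircase_le (hW : Antitone W) (hW0 : ∀ n, 0 ≤ W n) (hM : ∀ n, 0 < M n)
    (hMmono : Monotone M) (y : ℝ) (m : ℕ) :
    dist (staircase W M y) (stepSum W M m y + W m * (⌊M (m + 1) * y⌋ / M (m + 1))) ≤
      W (m + 1) * (M (m + 1))⁻¹ := by
  have hlow := sub_le_staircase hW hW0 hM hMmono y (m + 1)
  have hupp := staircase_le hW hW0 hM hMmono y (m + 1)
  have hinv : (M (m + 1 + 1))⁻¹ ≤ (M (m + 1))⁻¹ := inv_anti₀ (hM _) (hMmono (m + 1).le_succ)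
  rw [stepSum_succ] at hlow hupp
  rw [Real.dist_eq, abs_le]
  constructor <;> nlinarith [hW0 (m + 1), floor_mul_div_le (hM (m + 1)) y,
    sub_inv_le_floor_mul_div (hM (m + 1)) y]

end Staircase

section DyadicStaircase

/-- The staircase function acting on binary expansions by inserting blocks of zeros: the
`a (k + 1)`-th binary digit of `y` is followed by `Z (k + 1) - Z k` zeros. -/
def dyadicStaircase (a Z : ℕ → ℕ) : ℝ → ℝ :=
  staircase (fun n => (1 / 2) ^ Z n) (fun n => 2 ^ a n)

lemma intCast_mul_half_pow_mem_zmultiples (n : ℤ) {p N : ℕ} (hpN : p ≤ N) :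
    n * (1 / 2 : ℝ) ^ p ∈ AddSubgroup.zmultiples ((1 / 2 : ℝ) ^ N) := by
  obtain ⟨q, rfl⟩ := Nat.exists_eq_add_of_le hpN
  refine AddSubgroup.mem_zmultiples_iff.2 ⟨n * 2 ^ q, ?_⟩
  rw [zsmul_eq_mul, pow_add]
  push_cast
  rw [mul_mul_mul_comm, ← mul_pow]
  norm_num

lemma exists_fin_div_eq_of_mem_zmultiples {N : ℕ} {x : ℝ}
    (hx : x ∈ AddSubgroup.zmultiples ((1 / 2 : ℝ) ^ N)) (hx01 : x ∈ Icc 0 1) :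
    ∃ k : Fin (2 ^ N + 1), (k : ℝ) / 2 ^ N = x := by
  obtain ⟨n, rfl⟩ := AddSubgroup.mem_zmultiples_iff.1 hx
  rw [zsmul_eq_mul, one_div, inv_pow, ← div_eq_mul_inv] at *
  have hpow : (0 : ℝ) < 2 ^ N := by positivity
  obtain ⟨hn0, hn1⟩ := hx01
  rw [le_div_iff₀ hpow, zero_mul] at hn0
  rw [div_le_one hpow] at hn1
  lift n to ℕ using by exact_mod_cast hn0
  exact ⟨⟨n, Nat.lt_succ_of_le (by exact_mod_cast hn1)⟩, by simp⟩

variable {a Z : ℕ → ℕ}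

lemma antitone_half_pow (hZ : Monotone Z) : Antitone fun n => (1 / 2 : ℝ) ^ Z n :=
  (pow_right_anti₀ (by norm_num) (by norm_num)).comp_monotone hZ

lemma monotone_two_pow (ha : Monotone a) : Monotone fun n => (2 : ℝ) ^ a n :=
  (pow_right_mono₀ one_le_two).comp ha

lemma mapsTo_dyadicStaircase_Icc (ha : Monotone a) (hZ : Monotone Z) :
    MapsTo (dyadicStaircase a Z) (Icc 0 1) (Icc 0 1) :=
  mapsTo_staircase_Icc (antitone_half_pow hZ) (fun n => by positivity)
    (pow_le_one₀ (by norm_num) (by norm_num)) (fun n => by positivity) (monotone_two_pow ha)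

lemma stepSum_add_floor_mem_zmultiples (ha : Monotone a) (hZ : Monotone Z) (m : ℕ) (y : ℝ) :
    stepSum (fun n => (1 / 2) ^ Z n) (fun n => 2 ^ a n) m y +
      (1 / 2) ^ Z m * (⌊(2 : ℝ) ^ a (m + 1) * y⌋ / 2 ^ a (m + 1)) ∈
        AddSubgroup.zmultiples ((1 / 2 : ℝ) ^ (a (m + 1) + Z m)) := by
  have hmem : ∀ k l, k ≤ m → l ≤ m →
      (1 / 2 : ℝ) ^ Z l * (⌊(2 : ℝ) ^ a (k + 1) * y⌋ / 2 ^ a (k + 1)) ∈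
        AddSubgroup.zmultiples ((1 / 2 : ℝ) ^ (a (m + 1) + Z m)) := fun k l hk hl => by
    convert intCast_mul_half_pow_mem_zmultiples ⌊(2 : ℝ) ^ a (k + 1) * y⌋
      (add_le_add (ha (Nat.succ_le_succ hk)) (hZ hl)) using 1
    rw [pow_add, one_div_pow 2 (a (k + 1))]
    ring
  refine add_mem (sum_mem fun k hk => ?_) (hmem m m le_rfl le_rfl)
  have hkm : k < m := Finset.mem_range.1 hk
  rw [sub_mul]
  exact sub_mem (hmem k k hkm.le hkm.le) (hmem k (k + 1) hkm.le hkm)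

lemma exists_dist_dyadicStaircase_le (ha : Monotone a) (hZ : Monotone Z) {y : ℝ}
    (hy : y ∈ Icc 0 1) (m : ℕ) : ∃ k : Fin (2 ^ (a (m + 1) + Z m) + 1),
      dist (dyadicStaircase a Z y) (k / 2 ^ (a (m + 1) + Z m)) ≤
        (1 / 2) ^ (a (m + 1) + Z (m + 1)) := by
  have hW := antitone_half_pow hZ
  have hW0 : ∀ n, (0 : ℝ) ≤ (1 / 2) ^ Z n := fun n => by positivity
  have hM : ∀ n, (0 : ℝ) < 2 ^ a n := fun n => by positivity
  obtain ⟨k, hk⟩ := exists_fin_div_eq_of_mem_zmultiples (stepSum_add_floor_mem_zmultiples ha hZ m y)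
    (stepSum_add_floor_mem_Icc hW hW0 (pow_le_one₀ (by norm_num) (by norm_num)) hM hy m)
  refine ⟨k, ?_⟩
  rw [hk, pow_add, mul_comm ((1 / 2) ^ a (m + 1)), one_div_pow 2 (a (m + 1)),
    one_div (2 ^ a (m + 1))]
  exact dist_staircase_le hW hW0 hM (monotone_two_pow ha) y m

lemma dist_le_two_mul_dist_dyadicStaircase_rpow (ha : StrictMono a) (ha0 : a 0 = 0)
    (hZ : Monotone Z) {β : ℝ} (hβ : 0 ≤ β) (hZβ : ∀ n, Z n ≤ β * a n) {y z : ℝ}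
    (hyz : dist y z ≤ 2) :
    dist y z ≤ 2 * dist (dyadicStaircase a Z y) (dyadicStaircase a Z z) ^ (β + 1)⁻¹ := by
  refine dist_le_two_mul_dist_staircase_rpow (antitone_half_pow hZ) (fun n => by positivity)
    (monotone_two_pow ha.monotone) (by simp [ha0]) ?_ hβ (fun n => ?_) hyz
  · exact (tendsto_pow_atTop_atTop_of_one_lt one_lt_two).comp ha.tendsto_atTop
  · rw [one_div, inv_pow, ← Real.rpow_natCast, ← Real.rpow_natCast, ← Real.rpow_mul zero_le_two,
      ← Real.rpow_neg zero_le_two]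
    gcongr
    · exact one_le_two
    · linarith [hZβ n]

end DyadicStaircase

section CubeMap

variable {d : ℕ} {g : ℝ → ℝ}

/-- The coordinatewise action on `[0,1]^d` of a self-map of `[0,1]`. -/
def cubeMap (d : ℕ) (hg : MapsTo g (Icc 0 1) (Icc 0 1)) (y : Cube d) : Cube d :=
  ⟨fun i => g (y.1 i), fun i => (hg ⟨y.2.1 i, y.2.2 i⟩).1, fun i => (hg ⟨y.2.1 i, y.2.2 i⟩).2⟩

lemma dist_le_mul_dist_cubeMap_rpow (hg : MapsTo g (Icc 0 1) (Icc 0 1)) {C r : ℝ} (hC : 0 ≤ C)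
    (hr : 0 ≤ r) (hdist : ∀ s ∈ Icc (0 : ℝ) 1, ∀ t ∈ Icc (0 : ℝ) 1,
      dist s t ≤ C * dist (g s) (g t) ^ r) (y z : Cube d) :
    dist y z ≤ C * dist (cubeMap d hg y) (cubeMap d hg z) ^ r := by
  rw [Subtype.dist_eq, dist_pi_le_iff (by positivity)]
  intro i
  refine (hdist _ ⟨y.2.1 i, y.2.2 i⟩ _ ⟨z.2.1 i, z.2.2 i⟩).trans ?_
  gcongr
  exact dist_le_pi_dist (cubeMap d hg y).1 (cubeMap d hg z).1 i

lemma exists_dist_cubeMap_gridPoint_le (hg : MapsTo g (Icc 0 1) (Icc 0 1)) {N : ℕ} {ε : ℝ}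
    (hε : 0 ≤ ε) (happrox : ∀ s ∈ Icc (0 : ℝ) 1, ∃ k : Fin (2 ^ N + 1), dist (g s) (k / 2 ^ N) ≤ ε)
    (y : Cube d) : ∃ k, dist (cubeMap d hg y) (gridPoint d N k) ≤ ε := by
  choose k hk using fun i => happrox (y.1 i) ⟨y.2.1 i, y.2.2 i⟩
  exact ⟨k, by rwa [Subtype.dist_eq, dist_pi_le_iff hε]⟩

end CubeMap

section Approximable

variable {d : ℕ}

/-- The points of `[0,1]^d` which, at infinitely many scales `2 ^ (-j)` with `j ∈ J`, are
approximated by the grid of that mesh to within `2 ^ (-γ * j)`, for every order `γ < α`. -/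
def approximable (d : ℕ) (J : Set ℕ) (α : ℝ) : Set (Cube d) :=
  {x | ∀ γ < α, ∃ᶠ j in atTop, j ∈ J ∧ ∃ k, dist x (gridPoint d j k) ≤ 2 ^ (-(γ * j))}

lemma hausdorffMeasure_univ_le_of_dist_le {X Y : Type*} [MetricSpace X] [MeasurableSpace X]
    [BorelSpace X] [MetricSpace Y] [MeasurableSpace Y] [BorelSpace Y] {f : X → Y} {C r s : ℝ}
    (hC : 0 ≤ C) (hr : 0 < r) (hs : 0 ≤ s) (hf : ∀ x y, dist x y ≤ C * dist (f x) (f y) ^ r) :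
    μH[s] (univ : Set X) ≤ ENNReal.ofReal C ^ s * μH[r * s] (range f) := by
  rcases isEmpty_or_nonempty X
  · simp [univ_eq_empty_iff.2 ‹_›]
  have hinj : Function.Injective f := fun x y hxy => dist_le_zero.1 <| by
    simpa [hxy, Real.zero_rpow hr.ne'] using hf x y
  lift C to ℝ≥0 using hC
  lift r to ℝ≥0 using hr.le
  have hinv := Function.leftInverse_invFun hinj
  have hold : HolderOnWith C r (Function.invFun f) (range f) := by
    rintro _ ⟨x, rfl⟩ _ ⟨y, rfl⟩
    rw [hinv x, hinv y, edist_dist, edist_dist,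
      ENNReal.ofReal_rpow_of_nonneg dist_nonneg r.coe_nonneg, ← ENNReal.ofReal_coe_nnreal,
      ← ENNReal.ofReal_mul C.coe_nonneg]
    exact ENNReal.ofReal_le_ofReal (hf x y)
  simpa only [ENNReal.ofReal_coe_nnreal, ← range_comp, hinv.comp_eq_id, range_id] using
    hold.hausdorffMeasure_image_le (NNReal.coe_pos.1 hr) hs

lemma hausdorffMeasure_cube_univ : μH[(d : ℝ)] (univ : Set (Cube d)) = 1 := by
  have hpi : (μH[(d : ℝ)] : Measure (Fin d → ℝ)) = volume := by
    simpa only [Fintype.card_fin] using hausdorffMeasure_pi_real (ι := Fin d)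
  rw [← isometry_subtype_coe.hausdorffMeasure_image (Or.inl d.cast_nonneg), image_univ,
    Subtype.range_coe, hpi, Real.volume_Icc_pi]
  simp

lemma exists_strictMono_add_mem_of_frequently {J : Set ℕ} (hJ : ∃ᶠ j in atTop, j ∈ J)
    (z : ℕ → ℕ) : ∃ a : ℕ → ℕ, a 0 = 0 ∧ StrictMono a ∧
      ∀ n, (n + 1) * z (a n) ≤ a (n + 1) ∧ a (n + 1) + z (a n) ∈ J := by
  have hstep : ∀ n N, ∃ N' > N, (n + 1) * z N ≤ N' ∧ N' + z N ∈ J := fun n N => by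
    obtain ⟨j, hj, hjJ⟩ := frequently_atTop.1 hJ ((n + 2) * z N + N + 1)
    obtain ⟨N', rfl⟩ := Nat.exists_eq_add_of_le' (show z N ≤ j by nlinarith)
    exact ⟨N', by nlinarith, by nlinarith, hjJ⟩
  choose next hlt hnext using hstep
  exact ⟨fun n => Nat.rec 0 next n, rfl, strictMono_nat_of_lt_succ fun n => hlt n _,
    fun n => hnext n _⟩

lemma eventually_mul_add_le {a z : ℕ → ℕ} (ha : StrictMono a)
    (haz : ∀ n, (n + 1) * z n ≤ a (n + 1)) {α γ : ℝ} (hγ : γ < α) :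
    ∀ᶠ n in atTop, γ * (a (n + 1) + z n : ℕ) ≤ α * a (n + 1) - 1 := by
  have hlim : Tendsto (fun n : ℕ => ((n + 1 : ℕ) : ℝ) * (α - γ)) atTop atTop :=
    (tendsto_natCast_atTop_atTop.comp (tendsto_add_atTop_nat 1)).atTop_mul_const (sub_pos.2 hγ)
  filter_upwards [hlim.eventually_ge_atTop (1 + |γ|)] with n hn
  have hna : ((n + 1 : ℕ) : ℝ) ≤ a (n + 1) := by exact_mod_cast ha.le_apply
  have hza : ((n + 1 : ℕ) : ℝ) * z n ≤ a (n + 1) := by exact_mod_cast haz n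
  have hpos : (0 : ℝ) < (n + 1 : ℕ) := by positivity
  have hz : ((n + 1 : ℕ) : ℝ) * (γ * z n) ≤ |γ| * a (n + 1) := by
    calc ((n + 1 : ℕ) : ℝ) * (γ * z n) ≤ (n + 1 : ℕ) * (|γ| * z n) := by
          gcongr
          exact le_abs_self γ
      _ = |γ| * ((n + 1 : ℕ) * z n) := by ring
      _ ≤ |γ| * a (n + 1) := by gcongr
  have ha1 : (1 + |γ|) * a (n + 1) ≤ (n + 1 : ℕ) * (α - γ) * a (n + 1) := by gcongr
  refine le_of_mul_le_mul_left ?_ hpos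
  rw [Nat.cast_add (a (n + 1))]
  linarith

lemma range_cubeMap_dyadicStaircase_subset {J : Set ℕ} {α : ℝ} {a Z : ℕ → ℕ} (ha : StrictMono a)
    (hZ : Monotone Z) (haZ : ∀ n, (n + 1) * Z n ≤ a (n + 1)) (haJ : ∀ n, a (n + 1) + Z n ∈ J)
    (hZα : ∀ n, (α - 1) * a n ≤ Z n + 1) :
    range (cubeMap d (mapsTo_dyadicStaircase_Icc ha.monotone hZ)) ⊆ approximable d J α := by
  rintro _ ⟨y, rfl⟩ γ hγ
  have hscale : Tendsto (fun n => a (n + 1) + Z n) atTop atTop :=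
    tendsto_atTop_mono (fun n => (Nat.le_succ n).trans (ha.le_apply.trans (Nat.le_add_right _ _)))
      tendsto_id
  refine hscale.frequently <| Eventually.frequently <|
    (eventually_mul_add_le ha haZ hγ).mono fun n hn => ⟨haJ n, ?_⟩
  obtain ⟨k, hk⟩ := exists_dist_cubeMap_gridPoint_le (mapsTo_dyadicStaircase_Icc ha.monotone hZ)
    (by positivity) (fun s hs => exists_dist_dyadicStaircase_le ha.monotone hZ hs n) y
  refine ⟨k, hk.trans ?_⟩
  rw [one_div, inv_pow, ← Real.rpow_natCast, ← Real.rpow_neg zero_le_two]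
  gcongr
  · exact one_le_two
  · rw [Nat.cast_add (a (n + 1)) (Z (n + 1))]
    linarith [hZα (n + 1)]

lemma hausdorffMeasure_approximable_ne_zero {J : Set ℕ} (hJ : ∃ᶠ j in atTop, j ∈ J) {α : ℝ}
    (hα : 1 ≤ α) : μH[d / α] (approximable d J α) ≠ 0 := by
  have hβ : 0 ≤ α - 1 := sub_nonneg.2 hα
  obtain ⟨a, ha0, ha, haJ⟩ := exists_strictMono_add_mem_of_frequently hJ fun N => ⌊(α - 1) * N⌋₊
  have hZ : Monotone fun n => ⌊(α - 1) * a n⌋₊ := fun m n hmn =>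
    Nat.floor_mono (by have := ha.monotone hmn; gcongr)
  have hsub := range_cubeMap_dyadicStaircase_subset (d := d) ha hZ (fun n => (haJ n).1)
    (fun n => (haJ n).2) fun n => (Nat.lt_floor_add_one _).le
  have hholder := dist_le_mul_dist_cubeMap_rpow (d := d)
    (mapsTo_dyadicStaircase_Icc ha.monotone hZ) zero_le_two (by positivity) fun s hs t ht =>
      dist_le_two_mul_dist_dyadicStaircase_rpow ha ha0 hZ hβ
        (fun n => Nat.floor_le (by positivity))
        ((Real.dist_le_of_mem_Icc_01 hs ht).trans one_le_two)
  have hle := hausdorffMeasure_univ_le_of_dist_le zero_le_two (by positivity) d.cast_nonneg hholder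
  rw [hausdorffMeasure_cube_univ, sub_add_cancel, ← div_eq_inv_mul] at hle
  intro hzero
  simp [measure_mono_null hsub hzero] at hle

end Approximable

section Spectrum

variable {d : ℕ} {μ : ProbabilityMeasure (Cube d)}

lemma approximable_subset_setOf_locDim_le {h : ℝ} (hh : 0 < h) (hhd : h ≤ d) :
    approximable d {j | μ ∈ gridCharging d j} (d / h) ⊆
      {x | locDim (μ : Measure (Cube d)) x ≤ h} := by
  refine fun x hx => EReal.le_of_forall_lt_iff_le.1 fun t ht => ?_
  have hht : h < t := EReal.coe_lt_coe_iff.1 ht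
  have hd : (0 : ℝ) < d := hh.trans_le hhd
  have ht0 : 0 < t := hh.trans hht
  obtain ⟨γ, htγ, hγh⟩ := exists_between (div_lt_div_of_pos_left hd hh hht)
  exact locDim_le_of_frequently_dist_gridPoint_le ((div_pos hd ht0).trans htγ)
    ((div_lt_iff₀' ht0).1 htγ) (hx γ hγh)

lemma locDim_zero_le_of_mem_typicalMeasures (hμ : μ ∈ typicalMeasures d) :
    locDim (μ : Measure (Cube d)) 0 ≤ 0 := by
  refine EReal.le_of_forall_lt_iff_le.1 fun t ht => ?_
  have ht0 : 0 < t := EReal.coe_pos.1 ht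
  refine locDim_le_of_frequently_dist_gridPoint_le (α := (d + 1) / t) (by positivity)
    (by rw [mul_div_cancel₀ _ ht0.ne']; exact lt_add_one _) (hμ.mono fun j hj => ⟨hj, 0, ?_⟩)
  have hgrid : gridPoint d j 0 = 0 := by ext; simp [gridPoint]
  rw [hgrid, dist_self]
  positivity

lemma hausdorffMeasure_setOf_locDim_le_ne_zero (hμ : μ ∈ typicalMeasures d) {h : ℝ} (hh : 0 ≤ h)
    (hhd : h ≤ d) : μH[h] {x | locDim (μ : Measure (Cube d)) x ≤ h} ≠ 0 := by
  rcases hh.eq_or_lt with rfl | hpos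
  · have hne : {x | locDim (μ : Measure (Cube d)) x ≤ (0 : ℝ)}.Nonempty :=
      ⟨0, locDim_zero_le_of_mem_typicalMeasures hμ⟩
    exact (zero_lt_one.trans_le (Measure.one_le_hausdorffMeasure_zero_of_nonempty hne)).ne'
  · have hd : (0 : ℝ) < d := hpos.trans_le hhd
    refine fun hzero =>
      hausdorffMeasure_approximable_ne_zero (d := d) hμ ((one_le_div hpos).2 hhd) ?_
    rw [div_div_cancel₀ hd.ne']
    exact measure_mono_null (approximable_subset_setOf_locDim_le hpos hhd) hzero

end Spectrum

/-- There is a dense `Gδ` set `R` of probability measures on `[0,1]^d`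
(with the weak topology) such that for every `μ ∈ R` and every `h ∈ [0,d]`, the level set
`E_μ(h)` is nonempty and has Hausdorff dimension `h`. -/
theorem typical_measures_full_spectrum (d : ℕ) (hd : 1 ≤ d) :
    ∃ R : Set (ProbabilityMeasure (Cube d)), IsGδ R ∧ Dense R ∧
      ∀ μ ∈ R, ∀ h : ℝ, 0 ≤ h → h ≤ d →
        (levelSet (μ : Measure (Cube d)) h).Nonempty ∧
          dimH (levelSet (μ : Measure (Cube d)) h) = ENNReal.ofReal h := by
  refine ⟨typicalMeasures d, isGδ_typicalMeasures d, dense_typicalMeasures d,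
    fun μ hμ h hh hhd => levelSet_nonempty_and_dimH_eq _ hh ?_⟩
  exact hausdorffMeasure_setOf_locDim_le_ne_zero hμ hh hhd
end
end

section
/- Let μ be a Borel probability measure on [0,1]^d such that for every h ∈ [0,d] the level set E_μ(h) is nonempty and dim_H E_μ(h) = h. Then τ_μ(q) = d(q − 1) for all q ∈ [0,1]. -/
open MeasureTheory Metric Filter Set
open scoped ENNReal NNReal Topology

noncomputable section

/-!
For `0 ≤ q ≤ 1`, Jensen's inequality over the at most `2^{dj}` cubes of `G_j` gives
`s_j(q) ≤ 2^{dj(1-q)}`, hence `τ_μ(q) ≥ d(q-1)`.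

Conversely let `c < τ_μ(q)`, so that `s_j(q) ≤ 2^{-cj}` for large `j`, and let `h_μ(x) < h`. For
infinitely many `j` the ball `B(x, 2^{-j})` has mass at least a constant times `2^{-hj}`. If `x`
avoids the faces `x_i = 1`, at most `3^d` dyadic cubes meet such a small ball, so one of them has
comparable mass. By Chebyshev's inequality at most a constant times `2^{(qh-c)j}` cubes of `G_j` are
that heavy, and their neighbourhoods cover such points infinitely often: these points form a set
of dimension at most `qh - c`. The faces have dimension less than `d`, so if `{h_μ ≤ d}` has
dimension `d`, then `d ≤ qd - c` for every `c < τ_μ(q)`, that is `τ_μ(q) ≤ d(q-1)`.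
-/

theorem sum_rpow_le_card_rpow_mul_sum_rpow {ι : Type*} (s : Finset ι) {f : ι → ℝ} {q : ℝ}
    (hq₀ : 0 ≤ q) (hq₁ : q ≤ 1) (hf : ∀ i ∈ s, 0 ≤ f i) :
    ∑ i ∈ s, f i ^ q ≤ (s.card : ℝ) ^ (1 - q) * (∑ i ∈ s, f i) ^ q := by
  rcases s.eq_empty_or_nonempty with rfl | hs
  · rw [Finset.sum_empty]
    positivity
  have hn : (0 : ℝ) < s.card := by exact_mod_cast hs.card_pos
  have hjensen := (Real.concaveOn_rpow hq₀ hq₁).le_map_sum (t := s)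
    (w := fun _ => (s.card : ℝ)⁻¹) (p := f) (fun _ _ => by positivity)
    (by simp [hn.ne']) hf
  simp only [smul_eq_mul, ← Finset.mul_sum] at hjensen
  rw [inv_mul_le_iff₀ hn, Real.mul_rpow (by positivity) (Finset.sum_nonneg hf)] at hjensen
  rwa [Real.rpow_sub hn, Real.rpow_one, div_eq_mul_inv, ← Real.inv_rpow hn.le, mul_assoc]

theorem le_neg_one_div_mul_logb_iff {S c : ℝ} {j : ℕ} (hj : 0 < j) (hS : 0 < S) :
    c ≤ -(1 / (j : ℝ)) * Real.logb 2 S ↔ S ≤ ((1 / 2) ^ j) ^ c := by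
  have hj' : (0 : ℝ) < j := Nat.cast_pos.2 hj
  have hpow : ((1 / 2 : ℝ) ^ j) ^ c = 2 ^ (-(j * c)) := by
    rw [one_div_pow, one_div, Real.inv_rpow (by positivity), ← Real.rpow_neg (by positivity),
      ← Real.rpow_natCast_mul zero_le_two, mul_neg]
  rw [hpow, ← Real.logb_le_iff_le_rpow one_lt_two hS, le_neg, neg_mul, one_div, ← mul_neg,
    le_inv_mul_iff₀ hj']

theorem frequently_le_pow_of_frequently_rpow_le {f : ℝ → ℝ} (hf : Monotone f) {b h : ℝ}
    (hb₀ : 0 < b) (hb₁ : b < 1) (hh : 0 ≤ h) (hfreq : ∃ᶠ r in 𝓝[>] 0, r ^ h ≤ f r) :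
    ∃ᶠ j : ℕ in atTop, b ^ h * (b ^ j) ^ h ≤ f (b ^ j) := by
  refine frequently_atTop.2 fun N => ?_
  have hsmall : ∀ᶠ r : ℝ in 𝓝[>] 0, r ∈ Ioo 0 (b ^ N) := Ioo_mem_nhdsGT (by positivity)
  obtain ⟨r, hrf, hr₀, hrN⟩ := (hfreq.and_eventually hsmall).exists
  obtain ⟨j, hjr, hrj⟩ := exists_nat_pow_near_of_lt_one hr₀
    (hrN.le.trans (pow_le_one₀ hb₀.le hb₁.le)) hb₀ hb₁
  refine ⟨j, Nat.lt_succ_iff.1 ((pow_lt_pow_iff_right_of_lt_one₀ hb₀ hb₁).1 (hjr.trans hrN)), ?_⟩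
  calc b ^ h * (b ^ j) ^ h = (b ^ (j + 1)) ^ h := by
        rw [← Real.mul_rpow hb₀.le (by positivity), pow_succ']
    _ ≤ r ^ h := Real.rpow_le_rpow (by positivity) hjr.le hh
    _ ≤ f r := hrf
    _ ≤ f (b ^ j) := hf hrj

theorem ediam_thickening_le_three_mul {X : Type*} [PseudoEMetricSpace X] {E : Set X} {ε : ℝ}
    (hε : 0 ≤ ε) (hE : ediam E ≤ ENNReal.ofReal ε) :
    ediam (thickening ε E) ≤ ENNReal.ofReal (3 * ε) := by
  lift ε to ℝ≥0 using hε
  calc ediam (thickening ε E) ≤ ediam E + 2 * ε := ediam_thickening_le ε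
    _ ≤ ENNReal.ofReal ε + 2 * ε := by gcongr
    _ = ENNReal.ofReal (3 * ε) := by
        rw [ENNReal.ofReal_mul zero_le_three, ENNReal.ofReal_coe_nnreal, ENNReal.ofReal_ofNat]
        ring

theorem dimH_hyperplane_lt_finrank {E : Type*} [NormedAddCommGroup E] [NormedSpace ℝ E]
    [FiniteDimensional ℝ E] {f : E →ₗ[ℝ] ℝ} (hf : f ≠ 0) (c : ℝ) :
    dimH {x | f x = c} < Module.finrank ℝ E := by
  obtain ⟨x₀, hx₀⟩ := LinearMap.surjective hf c
  have hspan : vectorSpan ℝ {x | f x = c} ≤ LinearMap.ker f := by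
    rw [vectorSpan_def, Submodule.span_le]
    rintro _ ⟨x, hx, y, hy, rfl⟩
    simp_all
  have hker : LinearMap.ker f < ⊤ := lt_top_iff_ne_top.2 (mt LinearMap.ker_eq_top.1 hf)
  rw [Real.Convex.dimH_eq_finrank_vectorSpan (convex_hyperplane f.isLinear c) ⟨x₀, hx₀⟩]
  exact_mod_cast (Submodule.finrank_mono hspan).trans_lt (Submodule.finrank_lt hker.ne)

theorem hausdorffMeasure_limsup_cofinite_eq_zero {X ι : Type*} [EMetricSpace X]
    [MeasurableSpace X] [BorelSpace X] [Countable ι] {s : ℝ} (hs : 0 < s) {t : ι → Set X}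
    (hsum : ∑' i, ediam (t i) ^ s ≠ ∞) : μH[s] (limsup t cofinite) = 0 := by
  set tail : Finset ι → ℝ≥0∞ := fun u => ∑' i : {i // i ∉ u}, ediam (t i) ^ s
  have htail : Tendsto tail atTop (𝓝 0) := ENNReal.tendsto_tsum_compl_atTop_zero hsum
  have hroot : Tendsto (fun u => tail u ^ s⁻¹) atTop (𝓝 0) := by
    simpa [hs] using htail.ennrpow_const s⁻¹
  have hdiam : ∀ u, ∀ i : {i // i ∉ u}, ediam (t i) ≤ tail u ^ s⁻¹ := fun u i =>
    (ENNReal.le_rpow_inv_iff hs).2 (ENNReal.le_tsum i)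
  have hcover : ∀ u : Finset ι, limsup t cofinite ⊆ ⋃ i : {i // i ∉ u}, t i := by
    intro u x hx
    rw [mem_limsup_iff_frequently_mem, frequently_cofinite_iff_infinite] at hx
    obtain ⟨i, hxi, hiu⟩ := hx.exists_notMem_finset u
    exact mem_iUnion.2 ⟨⟨i, hiu⟩, hxi⟩
  refine le_zero_iff.1 ?_
  calc μH[s] (limsup t cofinite) ≤ liminf tail atTop :=
        Measure.hausdorffMeasure_le_liminf_tsum s _ _ hroot (fun u (i : {i // i ∉ u}) => t i)
          (.of_forall hdiam) (.of_forall hcover)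
    _ = 0 := htail.liminf_eq

section LimsupOfFiniteFamilies

variable {X : Type*} {ι : ℕ → Type*} {A : ∀ j, Finset (ι j)} {t : ∀ j, ι j → Set X}

theorem limsup_biUnion_subset_limsup_cofinite :
    limsup (fun j => ⋃ k ∈ A j, t j k) atTop ⊆
      limsup (fun p : Σ j, A j => t p.1 p.2) cofinite := by
  intro x hx
  rw [mem_limsup_iff_frequently_mem, Nat.frequently_atTop_iff_infinite] at hx
  rw [mem_limsup_iff_frequently_mem, frequently_cofinite_iff_infinite]
  refine Infinite.of_image Sigma.fst (hx.mono fun j hj => ?_)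
  obtain ⟨k, hk, hxk⟩ := mem_iUnion₂.1 hj
  exact ⟨⟨j, k, hk⟩, hxk, rfl⟩

variable [EMetricSpace X] {b C K a s : ℝ}

theorem tsum_sigma_ediam_rpow_ne_top (hb₀ : 0 < b) (hb₁ : b < 1) (hK : 0 ≤ K)
    (hs : 0 ≤ s) (has : a < s)
    (hdiam : ∀ j, ∀ k ∈ A j, ediam (t j k) ≤ ENNReal.ofReal (K * b ^ j))
    (hcard : ∀ᶠ j in atTop, ((A j).card : ℝ) ≤ C * (b ^ j) ^ (-a)) :
    ∑' p : Σ j, A j, ediam (t p.1 p.2) ^ s ≠ ∞ := by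
  have hgeom : Summable fun j : ℕ => C * K ^ s * (b ^ (s - a)) ^ j :=
    (summable_geometric_of_lt_one (by positivity)
      (Real.rpow_lt_one hb₀.le hb₁ (sub_pos.2 has))).mul_left _
  have hsummable : Summable fun j => ((A j).card : ℝ) * (K * b ^ j) ^ s := by
    refine hgeom.of_norm_bounded_eventually_nat ?_
    filter_upwards [hcard] with j hj
    rw [Real.norm_of_nonneg (by positivity)]
    calc ((A j).card : ℝ) * (K * b ^ j) ^ s
        ≤ C * (b ^ j) ^ (-a) * (K * b ^ j) ^ s := by gcongr
      _ = C * K ^ s * (b ^ j) ^ (s - a) := by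
          rw [Real.mul_rpow hK (by positivity), mul_mul_mul_comm, ← Real.rpow_add (by positivity),
            neg_add_eq_sub]
      _ = C * K ^ s * (b ^ (s - a)) ^ j := by rw [← Real.rpow_pow_comm hb₀.le]
  refine ne_top_of_le_ne_top hsummable.tsum_ofReal_ne_top ?_
  rw [ENNReal.tsum_sigma fun j (k : A j) => ediam (t j k) ^ s]
  refine ENNReal.tsum_le_tsum fun j => ?_
  calc ∑' k : A j, ediam (t j k) ^ s
      ≤ ∑' _ : A j, ENNReal.ofReal (K * b ^ j) ^ s :=
        ENNReal.tsum_le_tsum fun k => ENNReal.rpow_le_rpow (hdiam j k k.2) hs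
    _ = ENNReal.ofReal ((A j).card * (K * b ^ j) ^ s) := by
        rw [tsum_fintype, Finset.sum_const, Finset.card_univ, Fintype.card_coe, nsmul_eq_mul,
          ENNReal.ofReal_rpow_of_nonneg (by positivity) hs,
          ENNReal.ofReal_mul (Nat.cast_nonneg _), ENNReal.ofReal_natCast]

theorem dimH_limsup_biUnion_le (hb₀ : 0 < b) (hb₁ : b < 1) (hK : 0 ≤ K)
    (hdiam : ∀ j, ∀ k ∈ A j, ediam (t j k) ≤ ENNReal.ofReal (K * b ^ j))
    (hcard : ∀ᶠ j in atTop, ((A j).card : ℝ) ≤ C * (b ^ j) ^ (-a)) :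
    dimH (limsup (fun j => ⋃ k ∈ A j, t j k) atTop) ≤ ENNReal.ofReal a := by
  borelize X
  refine dimH_le fun s hs_top => le_of_not_gt fun has => ?_
  obtain ⟨has, hs⟩ : a < s ∧ (0 : ℝ) < s := by
    rw [← ENNReal.ofReal_coe_nnreal, ENNReal.ofReal_lt_ofReal_iff'] at has
    exact has
  have hzero := hausdorffMeasure_limsup_cofinite_eq_zero hs
    (tsum_sigma_ediam_rpow_ne_top hb₀ hb₁ hK hs.le has hdiam hcard)
  rw [measure_mono_null limsup_biUnion_subset_limsup_cofinite hzero] at hs_top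
  exact ENNReal.zero_ne_top hs_top

end LimsupOfFiniteFamilies

section LocalDimension

variable {d : ℕ} {μ : Measure (Cube d)} [IsFiniteMeasure μ] {x : Cube d} {h : ℝ}

theorem rpow_le_measureReal_ball_of_log_div_log_lt {r : ℝ} (hr₀ : 0 < r) (hr₁ : r < 1)
    (hlt : ENNReal.log (μ (ball x r)) / (Real.log r : EReal) < h) :
    r ^ h ≤ μ.real (ball x r) := by
  have hlog : Real.log r < 0 := Real.log_neg hr₀ hr₁
  have hμ : μ (ball x r) ≠ 0 := by
    intro hμ
    rw [hμ, ENNReal.log_zero, EReal.bot_div_of_neg_ne_bot (by exact_mod_cast hlog)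
      (EReal.coe_ne_bot _)] at hlt
    exact not_top_lt hlt
  have hpos : 0 < (μ (ball x r)).toReal := ENNReal.toReal_pos hμ (measure_ne_top _ _)
  rw [ENNReal.log_pos_real hμ (measure_ne_top _ _), ← EReal.coe_div, EReal.coe_lt_coe_iff,
    div_lt_iff_of_neg hlog, ← Real.log_rpow hr₀, Real.log_lt_log_iff (by positivity) hpos] at hlt
  exact hlt.le

theorem frequently_le_measureReal_ball_of_locDim_lt {b : ℝ} (hb₀ : 0 < b) (hb₁ : b < 1)
    (hh : 0 ≤ h) (hx : locDim μ x < h) :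
    ∃ᶠ j : ℕ in atTop, b ^ h * (b ^ j) ^ h ≤ μ.real (ball x (b ^ j)) := by
  refine frequently_le_pow_of_frequently_rpow_le
    (fun r s hrs => measureReal_mono (ball_subset_ball hrs)) hb₀ hb₁ hh ?_
  refine ((frequently_lt_of_liminf_lt (by isBoundedDefault) hx).and_eventually
    (Ioo_mem_nhdsGT one_pos)).mono ?_
  rintro r ⟨hlt, hr₀, hr₁⟩
  exact rpow_le_measureReal_ball_of_log_div_log_lt hr₀ hr₁ hlt

end LocalDimension

section DyadicCubes

variable {d : ℕ}

/-- The half-open cube `[0,1)^d`, which is the union of the dyadic cubes of each generation;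
the cubes of `G_j` miss the faces `x_i = 1` of `[0,1]^d`. -/
def halfOpenCube (d : ℕ) : Set (Cube d) := {x | ∀ i, (x : Fin d → ℝ) i < 1}

/-- The index `(⌊2^j x_i⌋)_i` of the dyadic cube of generation `j` containing `x`, with values in
`ℕ` so that it makes sense also on the faces `x_i = 1`. -/
def dyadicIndex (j : ℕ) (x : Cube d) (i : Fin d) : ℕ := ⌊(x : Fin d → ℝ) i * 2 ^ j⌋₊

theorem mem_dyadicCube_iff {j : ℕ} {k : Fin d → Fin (2 ^ j)} {x : Cube d} :
    x ∈ dyadicCube d j k ↔ dyadicIndex j x = fun i => (k i : ℕ) := by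
  have hp : (0 : ℝ) < 2 ^ j := by positivity
  have hx : ∀ i, 0 ≤ (x : Fin d → ℝ) i * 2 ^ j := fun i => mul_nonneg (x.2.1 i) hp.le
  simp only [dyadicCube, mem_ofPred_eq, funext_iff, dyadicIndex, Nat.floor_eq_iff (hx _),
    div_le_iff₀ hp, lt_div_iff₀ hp]

theorem measurable_dyadicIndex (j : ℕ) : Measurable (dyadicIndex (d := d) j) :=
  measurable_pi_lambda _ fun i => Nat.measurable_floor.comp
    (((measurable_pi_apply i).comp measurable_subtype_coe).mul_const _)

theorem measurableSet_dyadicCube (j : ℕ) (k : Fin d → Fin (2 ^ j)) :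
    MeasurableSet (dyadicCube d j k) := by
  have hpreimage : dyadicCube d j k = dyadicIndex j ⁻¹' {fun i => (k i : ℕ)} :=
    ext fun _ => mem_dyadicCube_iff
  rw [hpreimage]
  exact measurable_dyadicIndex j (measurableSet_singleton _)

theorem pairwise_disjoint_dyadicCube (d j : ℕ) :
    Pairwise (Function.onFun Disjoint (dyadicCube d j)) := by
  refine fun k l hkl => Set.disjoint_left.2 fun x hk hl => hkl (funext fun i => Fin.ext ?_)
  exact congrFun ((mem_dyadicCube_iff.1 hk).symm.trans (mem_dyadicCube_iff.1 hl)) i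

theorem exists_mem_dyadicCube {x : Cube d} (hx : x ∈ halfOpenCube d) (j : ℕ) :
    ∃ k, x ∈ dyadicCube d j k := by
  have hlt : ∀ i, dyadicIndex j x i < 2 ^ j := fun i => by
    refine (Nat.floor_lt (mul_nonneg (x.2.1 i) (by positivity))).2 ?_
    push_cast
    exact mul_lt_of_lt_one_left (by positivity) (hx i)
  exact ⟨fun i => ⟨dyadicIndex j x i, hlt i⟩, mem_dyadicCube_iff.2 rfl⟩

theorem isOpen_halfOpenCube (d : ℕ) : IsOpen (halfOpenCube d) := by
  simp only [halfOpenCube, ofPred_forall]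
  exact isOpen_iInter_of_finite fun i =>
    isOpen_lt ((continuous_apply i).comp continuous_subtype_val) continuous_const

theorem dimH_face_lt (i : Fin d) : dimH {x : Cube d | (x : Fin d → ℝ) i = 1} < d := by
  rw [← isometry_subtype_coe.dimH_image]
  have hproj : (LinearMap.proj i : (Fin d → ℝ) →ₗ[ℝ] ℝ) ≠ 0 := fun h => by
    simpa using LinearMap.congr_fun h 1
  calc dimH (Subtype.val '' {x : Cube d | (x : Fin d → ℝ) i = 1})
      ≤ dimH {y : Fin d → ℝ | LinearMap.proj (R := ℝ) i y = 1} :=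
        dimH_mono (image_subset_iff.2 fun _ hx => hx)
    _ < d := by simpa using dimH_hyperplane_lt_finrank hproj 1

theorem dimH_compl_halfOpenCube_lt (hd : 0 < d) : dimH (halfOpenCube d)ᶜ < d := by
  have hfaces : (halfOpenCube d)ᶜ = ⋃ i, {x : Cube d | (x : Fin d → ℝ) i = 1} := by
    ext x
    have hle : ∀ i, (x : Fin d → ℝ) i ≤ 1 := x.2.2
    simp [halfOpenCube, (hle _).ge_iff_eq]
  have : Nonempty (Fin d) := ⟨⟨0, hd⟩⟩
  obtain ⟨i, hi⟩ := exists_eq_ciSup_of_finite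
    (f := fun i : Fin d => dimH {x : Cube d | (x : Fin d → ℝ) i = 1})
  rw [hfaces, dimH_iUnion, ← hi]
  exact dimH_face_lt i

theorem ediam_dyadicCube_le (j : ℕ) (k : Fin d → Fin (2 ^ j)) :
    ediam (dyadicCube d j k) ≤ ENNReal.ofReal ((1 / 2) ^ j) := by
  refine ediam_le fun x hx y hy => ?_
  rw [edist_dist]
  refine ENNReal.ofReal_le_ofReal ((dist_pi_le_iff (by positivity)).2 fun i => ?_)
  calc dist ((x : Fin d → ℝ) i) ((y : Fin d → ℝ) i)
      ≤ ((k i : ℝ) + 1) / 2 ^ j - (k i : ℝ) / 2 ^ j :=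
        Real.dist_le_of_mem_Icc ⟨(hx i).1, (hx i).2.le⟩ ⟨(hy i).1, (hy i).2.le⟩
    _ = (1 / 2) ^ j := by rw [← sub_div, add_sub_cancel_left, one_div_pow]

theorem ediam_thickening_dyadicCube_le (j : ℕ) (k : Fin d → Fin (2 ^ j)) :
    ediam (thickening ((1 / 2) ^ j) (dyadicCube d j k)) ≤ ENNReal.ofReal (3 * (1 / 2) ^ j) :=
  ediam_thickening_le_three_mul (by positivity) (ediam_dyadicCube_le j k)

theorem dyadicIndex_mem_Icc_of_dist_lt {j : ℕ} {x y : Cube d} (hxy : dist y x < (1 / 2) ^ j)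
    (i : Fin d) :
    dyadicIndex j y i ∈ Finset.Icc (dyadicIndex j x i - 1) (dyadicIndex j x i + 1) := by
  have hp : (0 : ℝ) < 2 ^ j := by positivity
  have hdist : dist ((y : Fin d → ℝ) i) ((x : Fin d → ℝ) i) < (1 / 2) ^ j :=
    (dist_le_pi_dist _ _ i).trans_lt hxy
  rw [Real.dist_eq, one_div_pow, lt_div_iff₀ hp, ← abs_of_pos hp, ← abs_mul, sub_mul,
    abs_sub_lt_iff] at hdist
  have hsucc : ∀ {a b : ℝ}, 0 ≤ b → a < b + 1 → ⌊a⌋₊ ≤ ⌊b⌋₊ + 1 := fun hb hab =>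
    (Nat.floor_le_floor hab.le).trans_eq (Nat.floor_add_one hb)
  have hle_succ := hsucc (mul_nonneg (x.2.1 i) hp.le) (sub_lt_iff_lt_add'.1 hdist.1)
  have hle_succ' := hsucc (mul_nonneg (y.2.1 i) hp.le) (sub_lt_iff_lt_add'.1 hdist.2)
  rw [Finset.mem_Icc]
  exact ⟨Nat.sub_le_iff_le_add.2 hle_succ', hle_succ⟩

open Classical in
theorem card_filter_mem_thickening_dyadicCube_le (j : ℕ) (x : Cube d) :
    (Finset.univ.filter fun k => x ∈ thickening ((1 / 2) ^ j) (dyadicCube d j k)).card ≤ 3 ^ d := by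
  set near := fun i => Finset.Icc (dyadicIndex j x i - 1) (dyadicIndex j x i + 1)
  calc _ ≤ (Fintype.piFinset near).card := by
        refine Finset.card_le_card_of_injOn (fun k i => (k i : ℕ)) (fun k hk => ?_)
          (fun k _ l _ hkl => funext fun i => Fin.ext (congrFun hkl i))
        obtain ⟨y, hy, hxy⟩ := mem_thickening_iff.1 (Finset.mem_filter.1 hk).2
        refine Fintype.mem_piFinset.2 fun i => ?_
        change (fun i => (k i : ℕ)) i ∈ near i
        rw [← mem_dyadicCube_iff.1 hy]
        exact dyadicIndex_mem_Icc_of_dist_lt (dist_comm x y ▸ hxy) i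
    _ = ∏ i, (near i).card := Fintype.card_piFinset near
    _ ≤ ∏ _i : Fin d, 3 := Finset.prod_le_prod' fun i _ => by
        rw [Nat.card_Icc]
        omega
    _ = 3 ^ d := by simp

end DyadicCubes

section DyadicMasses

variable {d : ℕ} (μ : Measure (Cube d))

theorem sum_measureReal_dyadicCube_le_one [IsProbabilityMeasure μ] {j : ℕ}
    (s : Finset (Fin d → Fin (2 ^ j))) : ∑ k ∈ s, μ.real (dyadicCube d j k) ≤ 1 := by
  rw [← probReal_univ (μ := μ)]
  exact sum_measureReal_le_measureReal_univ (fun k _ => measurableSet_dyadicCube j k)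
    fun k _ l _ hkl => pairwise_disjoint_dyadicCube d j hkl

theorem dyadicSum_nonneg (q : ℝ) (j : ℕ) : 0 ≤ dyadicSum μ q j :=
  Finset.sum_nonneg fun _ _ => by positivity

theorem dyadicSum_le_rpow [IsProbabilityMeasure μ] {q : ℝ} (hq₀ : 0 ≤ q) (hq₁ : q ≤ 1) (j : ℕ) :
    dyadicSum μ q j ≤ ((1 / 2) ^ j) ^ (d * (q - 1)) := by
  set s := Finset.univ.filter fun k : Fin d → Fin (2 ^ j) => μ (dyadicCube d j k) ≠ 0
  have hcard : (s.card : ℝ) ≤ (2 ^ j) ^ d := by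
    exact_mod_cast (Finset.card_le_univ s).trans_eq (by simp)
  calc dyadicSum μ q j
      ≤ (s.card : ℝ) ^ (1 - q) * (∑ k ∈ s, μ.real (dyadicCube d j k)) ^ q :=
        sum_rpow_le_card_rpow_mul_sum_rpow s hq₀ hq₁ fun _ _ => measureReal_nonneg
    _ ≤ ((2 ^ j) ^ d) ^ (1 - q) * 1 := by
        have hq : 0 ≤ 1 - q := sub_nonneg.2 hq₁
        gcongr
        exact Real.rpow_le_one (Finset.sum_nonneg fun _ _ => measureReal_nonneg)
          (sum_measureReal_dyadicCube_le_one μ s) hq₀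
    _ = ((1 / 2) ^ j) ^ (d * (q - 1)) := by
        rw [mul_one, one_div_pow, one_div, Real.inv_rpow (by positivity),
          ← Real.rpow_neg (by positivity), ← Real.rpow_natCast_mul (by positivity)]
        ring_nf

/-- The dyadic cubes of generation `j` of mass at least `T`, indexed as in `dyadicCube`. -/
def heavyCubes (j : ℕ) (T : ℝ) : Finset (Fin d → Fin (2 ^ j)) :=
  Finset.univ.filter fun k => T ≤ μ.real (dyadicCube d j k)

variable {μ}

theorem mem_heavyCubes {j : ℕ} {T : ℝ} {k : Fin d → Fin (2 ^ j)} :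
    k ∈ heavyCubes μ j T ↔ T ≤ μ.real (dyadicCube d j k) := by
  simp [heavyCubes]

theorem card_heavyCubes_mul_rpow_le_dyadicSum {q T : ℝ} (hq : 0 ≤ q) (hT : 0 < T) (j : ℕ) :
    (heavyCubes μ j T).card * T ^ q ≤ dyadicSum μ q j := by
  have hsub : heavyCubes μ j T ⊆ Finset.univ.filter fun k => μ (dyadicCube d j k) ≠ 0 := by
    refine fun k hk => Finset.mem_filter.2 ⟨Finset.mem_univ _, fun hzero => ?_⟩
    have hmass := hT.trans_le (mem_heavyCubes.1 hk)
    simp [measureReal_def, hzero] at hmass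
  calc (heavyCubes μ j T).card * T ^ q = ∑ _k ∈ heavyCubes μ j T, T ^ q := by
        rw [Finset.sum_const, nsmul_eq_mul]
    _ ≤ ∑ k ∈ heavyCubes μ j T, μ.real (dyadicCube d j k) ^ q :=
        Finset.sum_le_sum fun k hk => Real.rpow_le_rpow hT.le (mem_heavyCubes.1 hk) hq
    _ ≤ dyadicSum μ q j :=
        Finset.sum_le_sum_of_subset_of_nonneg hsub fun _ _ _ => by positivity

theorem exists_mem_heavyCubes_of_ball_subset [IsFiniteMeasure μ] {j : ℕ} {x : Cube d} {T : ℝ}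
    (hT : 0 < T) (hball : T ≤ μ.real (ball x ((1 / 2) ^ j)))
    (hsub : ball x ((1 / 2) ^ j) ⊆ halfOpenCube d) :
    ∃ k ∈ heavyCubes μ j (T / 3 ^ d), x ∈ thickening ((1 / 2) ^ j) (dyadicCube d j k) := by
  classical
  set near := Finset.univ.filter fun k => x ∈ thickening ((1 / 2) ^ j) (dyadicCube d j k)
  have hcover : ball x ((1 / 2) ^ j) ⊆ ⋃ k ∈ near, dyadicCube d j k := by
    intro y hy
    obtain ⟨k, hk⟩ := exists_mem_dyadicCube (hsub hy) j
    have hnear : k ∈ near :=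
      Finset.mem_filter.2 ⟨Finset.mem_univ k, mem_thickening_iff.2 ⟨y, hk, mem_ball'.1 hy⟩⟩
    exact mem_iUnion₂.2 ⟨k, hnear, hk⟩
  have hmass : T ≤ ∑ k ∈ near, μ.real (dyadicCube d j k) :=
    calc T ≤ μ.real (ball x ((1 / 2) ^ j)) := hball
      _ ≤ μ.real (⋃ k ∈ near, dyadicCube d j k) := measureReal_mono hcover (measure_ne_top μ _)
      _ ≤ ∑ k ∈ near, μ.real (dyadicCube d j k) := measureReal_biUnion_finset_le near _
  have hne : near.Nonempty := Finset.nonempty_of_sum_ne_zero (hT.trans_le hmass).ne'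
  have hcard : (near.card : ℝ) ≤ 3 ^ d := by
    exact_mod_cast card_filter_mem_thickening_dyadicCube_le j x
  have hle : ∑ _k ∈ near, T / 3 ^ d ≤ ∑ k ∈ near, μ.real (dyadicCube d j k) :=
    calc ∑ _k ∈ near, T / 3 ^ d = near.card * (T / 3 ^ d) := by
          rw [Finset.sum_const, nsmul_eq_mul]
      _ ≤ 3 ^ d * (T / 3 ^ d) := by gcongr
      _ = T := mul_div_cancel₀ T (by positivity)
      _ ≤ _ := hmass
  obtain ⟨k, hk, hkT⟩ := Finset.exists_le_of_sum_le hne hle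
  exact ⟨k, mem_heavyCubes.2 hkT, (Finset.mem_filter.1 hk).2⟩

end DyadicMasses

section LqSpectrum

variable {d : ℕ} {μ : Measure (Cube d)} {q c h : ℝ}

theorem le_lqSpectrum [IsProbabilityMeasure μ] (hq₀ : 0 ≤ q) (hq₁ : q ≤ 1) :
    ((d * (q - 1) : ℝ) : EReal) ≤ lqSpectrum μ q := by
  refine le_liminf_of_le (by isBoundedDefault) ?_
  filter_upwards [eventually_gt_atTop 0] with j hj
  rw [EReal.coe_le_coe_iff]
  rcases (dyadicSum_nonneg μ q j).eq_or_lt with hzero | hpos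
  · -- `μ` lives on the faces `x_i = 1`, and `log₂ 0 = 0` by convention.
    rw [← hzero, Real.logb_zero, mul_zero]
    exact mul_nonpos_of_nonneg_of_nonpos d.cast_nonneg (sub_nonpos.2 hq₁)
  · exact (le_neg_one_div_mul_logb_iff hj hpos).2 (dyadicSum_le_rpow μ hq₀ hq₁ j)

theorem eventually_dyadicSum_le_of_lt_lqSpectrum (hc : c < lqSpectrum μ q) :
    ∀ᶠ j : ℕ in atTop, dyadicSum μ q j ≤ ((1 / 2) ^ j) ^ c := by
  filter_upwards [eventually_lt_of_lt_liminf hc (by isBoundedDefault), eventually_gt_atTop 0]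
    with j hcj hj
  rcases (dyadicSum_nonneg μ q j).eq_or_lt with hzero | hpos
  · rw [← hzero]
    positivity
  · exact (le_neg_one_div_mul_logb_iff hj hpos).1 (EReal.coe_lt_coe_iff.1 hcj).le

theorem eventually_card_heavyCubes_le {M : ℝ} (hq : 0 ≤ q) (hM : 0 < M)
    (hc : c < lqSpectrum μ q) :
    ∀ᶠ j : ℕ in atTop, ((heavyCubes μ j (M * ((1 / 2) ^ j) ^ h)).card : ℝ) ≤
      (M ^ q)⁻¹ * ((1 / 2) ^ j) ^ (-(q * h - c)) := by
  filter_upwards [eventually_dyadicSum_le_of_lt_lqSpectrum hc] with j hj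
  set r : ℝ := (1 / 2) ^ j
  have hr : 0 < r := by positivity
  have hT : 0 < M * r ^ h := by positivity
  calc ((heavyCubes μ j (M * r ^ h)).card : ℝ) ≤ r ^ c / (M * r ^ h) ^ q :=
        (le_div_iff₀ (by positivity)).2 ((card_heavyCubes_mul_rpow_le_dyadicSum hq hT j).trans hj)
    _ = (M ^ q)⁻¹ * (r ^ c / r ^ (h * q)) := by
        rw [Real.mul_rpow hM.le (by positivity), ← Real.rpow_mul hr.le, div_mul_eq_div_div_swap,
          div_eq_inv_mul _ (M ^ q)]
    _ = (M ^ q)⁻¹ * r ^ (-(q * h - c)) := by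
        rw [← Real.rpow_sub hr, neg_sub, mul_comm h q]

theorem dimH_locDim_lt_inter_halfOpenCube_le [IsFiniteMeasure μ] (hq : 0 ≤ q) (hh : 0 ≤ h)
    (hc : c < lqSpectrum μ q) :
    dimH ({x | locDim μ x < h} ∩ halfOpenCube d) ≤ ENNReal.ofReal (q * h - c) := by
  -- The ball at `x` loses `(1 / 2) ^ h` when its radius is rounded up to a power of `1 / 2`, and
  -- `3 ^ d` when it is replaced by the heaviest of the dyadic cubes that meet it.
  set M : ℝ := (1 / 2) ^ h / 3 ^ d
  set T : ℕ → ℝ := fun j => M * ((1 / 2) ^ j) ^ h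
  have hM : 0 < M := by positivity
  refine le_trans (dimH_mono ?_) (dimH_limsup_biUnion_le (b := 1 / 2) (A := fun j =>
    heavyCubes μ j (T j)) (t := fun j k => thickening ((1 / 2) ^ j) (dyadicCube d j k))
    (by norm_num) (by norm_num) zero_le_three (fun j k _ => ediam_thickening_dyadicCube_le j k)
    (eventually_card_heavyCubes_le hq hM hc))
  rintro x ⟨hx, hx₁⟩
  obtain ⟨ε, hε, hsub⟩ := Metric.isOpen_iff.1 (isOpen_halfOpenCube d) x hx₁
  have hsmall : ∀ᶠ j : ℕ in atTop, (1 / 2 : ℝ) ^ j < ε :=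
    (tendsto_pow_atTop_nhds_zero_of_lt_one (by norm_num) (by norm_num)).eventually_lt_const hε
  have hfreq := frequently_le_measureReal_ball_of_locDim_lt (b := 1 / 2) (by norm_num)
    (by norm_num) hh hx
  refine mem_limsup_iff_frequently_mem.2 ((hfreq.and_eventually hsmall).mono ?_)
  rintro j ⟨hball, hjε⟩
  obtain ⟨k, hk, hxk⟩ := exists_mem_heavyCubes_of_ball_subset (by positivity) hball
    ((ball_subset_ball hjε.le).trans hsub)
  rw [mul_div_right_comm] at hk
  exact mem_iUnion₂.2 ⟨k, hk, hxk⟩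

theorem dimH_locDim_le_inter_halfOpenCube_le [IsFiniteMeasure μ] (hq : 0 ≤ q) (hh : 0 ≤ h)
    (hc : c < lqSpectrum μ q) :
    dimH ({x | locDim μ x ≤ h} ∩ halfOpenCube d) ≤ ENNReal.ofReal (q * h - c) := by
  have htendsto : Tendsto (fun g => ENNReal.ofReal (q * g - c)) (𝓝[>] h)
      (𝓝 (ENNReal.ofReal (q * h - c))) :=
    (ENNReal.continuous_ofReal.comp (by fun_prop)).tendsto h |>.mono_left nhdsWithin_le_nhds
  refine ge_of_tendsto htendsto ?_
  filter_upwards [self_mem_nhdsWithin] with g hg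
  refine le_trans (dimH_mono (inter_subset_inter_left _ fun x hx => ?_))
    (dimH_locDim_lt_inter_halfOpenCube_le hq (hh.trans (le_of_lt hg)) hc)
  exact lt_of_le_of_lt hx (EReal.coe_lt_coe_iff.2 hg)

theorem lqSpectrum_le_of_le_dimH [IsFiniteMeasure μ] (hd : 0 < d)
    (hdim : d ≤ dimH {x | locDim μ x ≤ (d : ℝ)}) (hq : 0 ≤ q) :
    lqSpectrum μ q ≤ ((d * (q - 1) : ℝ) : EReal) := by
  refine EReal.ge_of_forall_gt_iff_ge.1 fun c hc => ?_
  have hinterior : d ≤ dimH ({x | locDim μ x ≤ (d : ℝ)} ∩ halfOpenCube d) := by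
    rw [← inter_union_compl {x | locDim μ x ≤ (d : ℝ)} (halfOpenCube d), dimH_union] at hdim
    refine (le_max_iff.1 hdim).resolve_right (not_le_of_gt ?_)
    exact (dimH_mono inter_subset_right).trans_lt (dimH_compl_halfOpenCube_lt hd)
  have hle := hinterior.trans (dimH_locDim_le_inter_halfOpenCube_le hq d.cast_nonneg hc)
  rw [ENNReal.natCast_le_ofReal hd.ne'] at hle
  rw [EReal.coe_le_coe_iff]
  linarith

end LqSpectrum

theorem lq_spectrum_of_linear_spectrum_general {d : ℕ} (hd : 0 < d) {μ : Measure (Cube d)}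
    [IsProbabilityMeasure μ] (hdim : d ≤ dimH {x | locDim μ x ≤ (d : ℝ)}) {q : ℝ}
    (hq₀ : 0 ≤ q) (hq₁ : q ≤ 1) : lqSpectrum μ q = ((d * (q - 1) : ℝ) : EReal) :=
  le_antisymm (lqSpectrum_le_of_le_dimH hd hdim hq₀) (le_lqSpectrum hq₀ hq₁)

/-- If a Borel probability measure `μ` on `[0,1]^d` satisfies
`E_μ(h) ≠ ∅` and `dim_H E_μ(h) = h` for every `h ∈ [0,d]`, then `τ_μ(q) = d(q-1)`
for all `q ∈ [0,1]`. -/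
theorem lq_spectrum_of_linear_spectrum (d : ℕ) (hd : 1 ≤ d) (μ : Measure (Cube d))
    [IsProbabilityMeasure μ]
    (H : ∀ h ∈ Set.Icc (0 : ℝ) (d : ℝ),
      (levelSet μ h).Nonempty ∧ dimH (levelSet μ h) = ENNReal.ofReal h) :
    ∀ q ∈ Set.Icc (0 : ℝ) 1, lqSpectrum μ q = (((d : ℝ) * (q - 1) : ℝ) : EReal) := by
  rintro q ⟨hq₀, hq₁⟩
  refine lq_spectrum_of_linear_spectrum_general hd ?_ hq₀ hq₁
  calc (d : ℝ≥0∞) = dimH (levelSet μ d) := by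
        rw [(H d ⟨d.cast_nonneg, le_rfl⟩).2, ENNReal.ofReal_natCast]
    _ ≤ dimH {x | locDim μ x ≤ (d : ℝ)} := dimH_mono fun _ hx => le_of_eq hx
end
end

section
/- For every θ > 1 there exist a strictly increasing sequence (j_p)_{p≥1} of positive integers, a Borel probability measure m on [0,1]^d whose support is contained in A_θ, a continuous increasing function ψ : [0,∞) → [0,∞) with ψ(0) = 0, and η > 0, such that m(B) ≤ |B|^{d/θ − ψ(|B|)} for every Borel set B ⊆ [0,1]^d with diameter |B| < η. Consequently every Borel set E with m(E) > 0 satisfies dim_H E ≥ d/θ. -/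
open MeasureTheory Metric Filter Set
open scoped ENNReal NNReal Topology

noncomputable section

/-- The union over `k ∈ Z_j` of the closed balls of radius `2^{-θ j}` centered at the
dyadic centers `(k + e) 2^{-j}`, in the supremum metric of `ℝ^d`. -/
def dyadicBallUnion (d : ℕ) (θ : ℝ) (j : ℕ) : Set (Fin d → ℝ) :=
  ⋃ k : Fin d → Fin (2 ^ j),
    Metric.closedBall (fun i => ((k i : ℝ) + 1 / 2) / 2 ^ j) ((2 : ℝ) ^ (-(θ * (j : ℝ))))

/-- The set `A_θ` of points of `[0,1]^d` belonging to infinitely many of the sets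
`∪_{k ∈ Z_{j_p}} B̄((k+e)2^{-j_p}, 2^{-θ j_p})`. -/
def atheta (d : ℕ) (θ : ℝ) (j : ℕ → ℕ) : Set (Fin d → ℝ) :=
  Set.Icc 0 1 ∩ {x | ∀ P : ℕ, ∃ p, P ≤ p ∧ x ∈ dyadicBallUnion d θ (j p)}

/-!
Forcing the binary digits at the positions `j ≤ i ≤ θ j` of each coordinate to read `1000…` puts
the point within `2 ^ (-θ j)` of a dyadic centre of level `j`. Take the other digits fair and
independent. Passing to a subsequence, the forced blocks may be assumed so sparse that all the
forced positions in `[√n, n)` belong to a single block, which holds at most `(1 - 1/θ) n + 1` of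
them. Hence at least `n/θ - √n - 1` of the first `n` digits of each coordinate are random, and a
ball of radius `2 ^ (-n)` has measure at most `2 ^ (-d n/θ + O(√n))`. The error `O(√n)` is the
gauge, and the bound on the dimension is the mass distribution principle.
-/

/-- Ball decay of exponent `D` up to the gauge `ψ`: `μ (B(x, r)) ≤ r ^ (D - ψ r)` for every centre
`x` and every scale `0 < r < η`. -/
def HasBallDecay {X : Type*} [PseudoMetricSpace X] [MeasurableSpace X] (μ : Measure X) (D : ℝ)
    (ψ : ℝ → ℝ) (η : ℝ) : Prop :=
  ∀ x r, 0 < r → r < η → μ (closedBall x r) ≤ ENNReal.ofReal (r ^ (D - ψ r))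

namespace HasBallDecay

lemma pi {ι : Type*} [Fintype ι] {X : ι → Type*} [∀ i, PseudoMetricSpace (X i)]
    [∀ i, MeasurableSpace (X i)] {μ : ∀ i, Measure (X i)} [∀ i, SigmaFinite (μ i)] {D : ι → ℝ}
    {ψ : ι → ℝ → ℝ} {η : ℝ} (h : ∀ i, HasBallDecay (μ i) (D i) (ψ i) η) :
    HasBallDecay (Measure.pi μ) (∑ i, D i) (fun r ↦ ∑ i, ψ i r) η := by
  intro x r hr hrη
  calc Measure.pi μ (closedBall x r)
      = ∏ i, μ i (closedBall (x i) r) := by rw [closedBall_pi x hr.le, Measure.pi_pi]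
    _ ≤ ∏ i, ENNReal.ofReal (r ^ (D i - ψ i r)) :=
        Finset.prod_le_prod' fun i _ ↦ h i (x i) r hr hrη
    _ = ENNReal.ofReal (r ^ (∑ i, D i - ∑ i, ψ i r)) := by
        rw [← Finset.sum_sub_distrib, Real.rpow_sum_of_pos hr,
          ENNReal.ofReal_prod_of_nonneg fun i _ ↦ Real.rpow_nonneg hr.le _]

section PseudoMetric

variable {X : Type*} [PseudoMetricSpace X] [MeasurableSpace X] {μ : Measure X} {D η s : ℝ}
  {ψ : ℝ → ℝ}

lemma eventually_measure_closedBall_le_rpow (h : HasBallDecay μ D ψ η) (hη : 0 < η)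
    (hψ : Tendsto ψ (𝓝[>] 0) (𝓝 0)) (hs : s < D) :
    ∀ᶠ r in 𝓝[>] 0, ∀ x, μ (closedBall x r) ≤ ENNReal.ofReal (r ^ s) := by
  filter_upwards [hψ.eventually_lt_const (sub_pos.2 hs), Ioo_mem_nhdsGT hη,
    Ioo_mem_nhdsGT one_pos] with r hψr hrη hr1 x
  refine (h x r hrη.1 hrη.2).trans (ENNReal.ofReal_le_ofReal ?_)
  exact Real.rpow_le_rpow_of_exponent_ge hr1.1 hr1.2.le (by linarith)

lemma measure_closedBall_zero (h : HasBallDecay μ D ψ η) (hη : 0 < η)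
    (hψ : Tendsto ψ (𝓝[>] 0) (𝓝 0)) (hD : 0 < D) (x : X) : μ (closedBall x 0) = 0 := by
  have hpow : Tendsto (fun r : ℝ ↦ ENNReal.ofReal (r ^ (D / 2))) (𝓝[>] 0) (𝓝 0) := by
    have := (Real.continuousAt_rpow_const 0 (D / 2) (.inr (by positivity))).tendsto
    rw [Real.zero_rpow (by positivity)] at this
    simpa using ENNReal.tendsto_ofReal (this.mono_left nhdsWithin_le_nhds)
  refine nonpos_iff_eq_zero.1 (ge_of_tendsto hpow ?_)
  filter_upwards [h.eventually_measure_closedBall_le_rpow hη hψ (half_lt_self hD),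
    self_mem_nhdsWithin] with r hr hr0
  exact (measure_mono (closedBall_subset_closedBall (mem_Ioi.1 hr0).le)).trans (hr x)

lemma measure_le_rpow_diam (h : HasBallDecay μ D ψ η) (hη : 0 < η)
    (hψ : Tendsto ψ (𝓝[>] 0) (𝓝 0)) (hD : 0 < D) {B : Set X} (hB : Bornology.IsBounded B)
    (hdiam : diam B < η) : μ B ≤ ENNReal.ofReal (diam B ^ (D - ψ (diam B))) := by
  rcases B.eq_empty_or_nonempty with rfl | ⟨x, hx⟩
  · simp
  have hsub : B ⊆ closedBall x (diam B) := fun y hy ↦ dist_le_diam_of_mem hB hy hx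
  rcases (diam_nonneg (s := B)).eq_or_lt with hzero | hpos
  · rw [← hzero] at hsub
    simp [measure_mono_null hsub (h.measure_closedBall_zero hη hψ hD x)]
  · exact (measure_mono hsub).trans (h x _ hpos hdiam)

end PseudoMetric

lemma ofReal_le_dimH {X : Type*} [MetricSpace X] [MeasurableSpace X] [BorelSpace X]
    {μ : Measure X} {D η : ℝ} {ψ : ℝ → ℝ} (h : HasBallDecay μ D ψ η) (hη : 0 < η)
    (hψ : Tendsto ψ (𝓝[>] 0) (𝓝 0)) (hD : 0 < D) {E : Set X} (hE : 0 < μ E) :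
    ENNReal.ofReal D ≤ dimH E := by
  refine ENNReal.le_of_forall_nnreal_lt fun s hs ↦ ?_
  rw [← ENNReal.ofReal_coe_nnreal, ENNReal.ofReal_lt_ofReal_iff hD] at hs
  obtain ⟨δ, hδ, hball⟩ := mem_nhdsGT_iff_exists_Ioo_subset.1
    (h.eventually_measure_closedBall_le_rpow hη hψ hs)
  refine le_dimH_of_hausdorffMeasure_ne_zero (hE.trans_le ?_).ne'
  refine Measure.le_hausdorffMeasure (s : ℝ) μ (ENNReal.ofReal (δ / 2))
    (by simpa using hδ) (fun B hB ↦ ?_) E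
  rcases B.eq_empty_or_nonempty with rfl | ⟨x, hx⟩
  · simp
  have hne : ediam B ≠ ⊤ := (hB.trans_lt ENNReal.ofReal_lt_top).ne
  have hbdd : Bornology.IsBounded B := isBounded_iff_ediam_ne_top.2 hne
  have hsub : B ⊆ closedBall x (diam B) := fun y hy ↦ dist_le_diam_of_mem hbdd hy hx
  rcases (diam_nonneg (s := B)).eq_or_lt with hzero | hpos
  · rw [← hzero] at hsub
    simp [measure_mono_null hsub (h.measure_closedBall_zero hη hψ hD x)]
  have hdiam : ediam B = ENNReal.ofReal (diam B) := (ENNReal.ofReal_toReal hne).symm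
  rw [hdiam, ENNReal.ofReal_rpow_of_pos hpos]
  rw [hdiam, ENNReal.ofReal_le_ofReal_iff (half_pos hδ).le] at hB
  exact (measure_mono hsub).trans (hball ⟨hpos, hB.trans_lt (half_lt_self hδ)⟩ x)

end HasBallDecay

/-- The gauge `r ↦ 1 / √(log₂ (1 + 1 / r))`; division by zero gives it the value `0` at `0`. -/
def invSqrtLog (r : ℝ) : ℝ := 1 / √(Real.logb 2 (1 + 1 / r))

lemma invSqrtLog_zero : invSqrtLog 0 = 0 := by simp [invSqrtLog]

lemma logb_one_add_one_div_pos {r : ℝ} (hr : 0 < r) : 0 < Real.logb 2 (1 + 1 / r) :=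
  Real.logb_pos one_lt_two (lt_add_of_pos_right _ (by positivity))

lemma strictMonoOn_invSqrtLog : StrictMonoOn invSqrtLog (Ici 0) := by
  intro r hr s _ hrs
  have hs : 0 < s := (mem_Ici.1 hr).trans_lt hrs
  have hlog := logb_one_add_one_div_pos hs
  rcases (mem_Ici.1 hr).eq_or_lt with rfl | hr0
  · rw [invSqrtLog_zero, invSqrtLog]
    positivity
  · unfold invSqrtLog
    gcongr
    exact one_lt_two

lemma tendsto_invSqrtLog_nhdsGT_zero : Tendsto invSqrtLog (𝓝[>] 0) (𝓝 0) := by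
  refine Tendsto.div_atTop tendsto_const_nhds (Real.tendsto_sqrt_atTop.comp ?_)
  refine (Real.tendsto_logb_atTop one_lt_two).comp (tendsto_atTop_add_const_left _ _ ?_)
  exact (tendsto_inv_nhdsGT_zero (𝕜 := ℝ)).congr fun r ↦ (one_div r).symm

lemma continuousOn_invSqrtLog : ContinuousOn invSqrtLog (Ici 0) := by
  intro r hr
  rcases (mem_Ici.1 hr).eq_or_lt with rfl | hr0
  · rw [← Ioi_insert, continuousWithinAt_insert_self, ContinuousWithinAt, invSqrtLog_zero]
    exact tendsto_invSqrtLog_nhdsGT_zero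
  · have hlog := logb_one_add_one_div_pos hr0
    have hsqrt : ContinuousAt (fun r ↦ √(Real.logb 2 (1 + 1 / r))) r := by
      unfold Real.logb
      refine ContinuousAt.sqrt (ContinuousAt.div_const (ContinuousAt.log ?_ (by positivity)) _)
      fun_prop (disch := positivity)
    exact (continuousAt_const.div hsqrt (Real.sqrt_pos.2 hlog).ne').continuousWithinAt

lemma four_add_sqrt_div_le_invSqrtLog {r L : ℝ} (hL : 1 ≤ L) (hr : r = 2 ^ (-L)) :
    (4 + √L) / L ≤ 10 * invSqrtLog r := by
  have hinv : 1 / r = 2 ^ L := by rw [hr, Real.rpow_neg zero_le_two, one_div, inv_inv]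
  have hlog : Real.logb 2 (1 + 1 / r) ≤ 2 ^ 2 * L := by
    have hone : (1 : ℝ) ≤ 2 ^ L := Real.one_le_rpow one_le_two (by linarith)
    calc Real.logb 2 (1 + 1 / r) ≤ Real.logb 2 (2 ^ (1 + L)) := by
          refine Real.logb_le_logb_of_le one_lt_two (by rw [hinv]; positivity) ?_
          rw [hinv, Real.rpow_add two_pos, Real.rpow_one]
          linarith
      _ = 1 + L := Real.logb_rpow two_pos one_lt_two.ne'
      _ ≤ 2 ^ 2 * L := by linarith
  have hsqrt : √(Real.logb 2 (1 + 1 / r)) ≤ 2 * √L := by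
    simpa [Real.sqrt_mul] using Real.sqrt_le_sqrt hlog
  have hsqrt_pos : 0 < √(Real.logb 2 (1 + 1 / r)) :=
    Real.sqrt_pos.2 (logb_one_add_one_div_pos (by rw [hr]; positivity))
  calc (4 + √L) / L ≤ 5 * √L / L := by
        gcongr
        linarith [Real.one_le_sqrt.2 hL]
    _ = 10 * (1 / (2 * √L)) := by
        field_simp
        rw [Real.sq_sqrt (by positivity)]
        ring
    _ ≤ 10 * invSqrtLog r := by
        unfold invSqrtLog
        gcongr

section Digits

variable {b : ℕ}

/-- The integer whose base-`b` expansion consists of the first `n` digits of `x`. -/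
def digitPrefix (x : ℕ → Fin b) : ℕ → ℕ
  | 0 => 0
  | n + 1 => b * digitPrefix x n + x n

lemma digitPrefix_lt (x : ℕ → Fin b) (n : ℕ) : digitPrefix x n < b ^ n := by
  induction n with
  | zero => simp [digitPrefix]
  | succ n ih =>
    calc b * digitPrefix x n + x n < b * digitPrefix x n + b := by gcongr; exact (x n).isLt
      _ = b * (digitPrefix x n + 1) := by ring
      _ ≤ b * b ^ n := by gcongr; exact ih
      _ = b ^ (n + 1) := (pow_succ' b n).symm

lemma eq_of_digitPrefix_eq {x y : ℕ → Fin b} {n : ℕ} (h : digitPrefix x n = digitPrefix y n) :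
    ∀ i < n, x i = y i := by
  induction n with
  | zero => simp
  | succ n ih =>
    have hlast : (x n : ℕ) = y n := by
      simpa [digitPrefix, Nat.mod_eq_of_lt] using congrArg (· % b) h
    have hinit : digitPrefix x n = digitPrefix y n := by
      rw [digitPrefix, digitPrefix, hlast, add_left_inj] at h
      exact Nat.eq_of_mul_eq_mul_left (Fin.pos (x 0)) h
    intro i hi
    rcases Nat.lt_succ_iff_lt_or_eq.1 hi with hi | rfl
    · exact ih hinit i hi
    · exact Fin.ext hlast

lemma digitPrefix_succ_div_pow (x : ℕ → Fin b) (n : ℕ) :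
    (digitPrefix x (n + 1) : ℝ) / b ^ (n + 1) =
      digitPrefix x n / b ^ n + x n / b ^ (n + 1) := by
  have hb : (b : ℝ) ≠ 0 := Nat.cast_ne_zero.2 (Fin.pos (x 0)).ne'
  rw [digitPrefix]
  push_cast
  field_simp
  ring

lemma sum_ofDigitsTerm_eq_digitPrefix_div_pow (x : ℕ → Fin b) (n : ℕ) :
    ∑ i ∈ Finset.range n, Real.ofDigitsTerm x i = digitPrefix x n / b ^ n := by
  induction n with
  | zero => simp [digitPrefix]
  | succ n ih =>
    rw [Finset.sum_range_succ, ih, digitPrefix_succ_div_pow, Real.ofDigitsTerm, div_eq_mul_inv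
      (x n : ℝ)]

lemma ofDigits_sub_digitPrefix_div_pow_mem_Icc (x : ℕ → Fin b) (n : ℕ) :
    Real.ofDigits x - digitPrefix x n / b ^ n ∈ Icc 0 ((b : ℝ) ^ n)⁻¹ := by
  rw [Real.ofDigits_eq_sum_add_ofDigits x n, sum_ofDigitsTerm_eq_digitPrefix_div_pow,
    add_sub_cancel_left]
  exact ⟨mul_nonneg (by positivity) (Real.ofDigits_nonneg _),
    mul_le_of_le_one_right (by positivity) (Real.ofDigits_le_one _)⟩

lemma digitPrefix_div_pow_eq_of_forall_eq_zero {x : ℕ → Fin b} {k m : ℕ} (hkm : k ≤ m)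
    (h : ∀ i, k ≤ i → i < m → (x i : ℕ) = 0) :
    (digitPrefix x m : ℝ) / b ^ m = digitPrefix x k / b ^ k := by
  induction m, hkm using Nat.le_induction with
  | base => rfl
  | succ m hkm ih =>
    rw [digitPrefix_succ_div_pow, h m hkm m.lt_succ_self, Nat.cast_zero, zero_div, add_zero]
    exact ih fun i hi him ↦ h i hi (him.trans m.lt_succ_self)

lemma abs_ofDigits_sub_center_le {x : ℕ → Fin 2} {k m : ℕ} (hkm : k < m) (hone : x k = 1)
    (hzero : ∀ i, k < i → i < m → x i = 0) :
    |Real.ofDigits x - (digitPrefix x k + 1 / 2) / 2 ^ k| ≤ ((2 : ℝ) ^ m)⁻¹ := by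
  have hcenter : ((digitPrefix x k : ℝ) + 1 / 2) / 2 ^ k = digitPrefix x m / (2 : ℕ) ^ m := by
    rw [digitPrefix_div_pow_eq_of_forall_eq_zero hkm fun i hi him ↦ by simp [hzero i hi him],
      digitPrefix_succ_div_pow, hone, pow_succ]
    push_cast
    field_simp
    simp
  have hmem := ofDigits_sub_digitPrefix_div_pow_mem_Icc x m
  rw [hcenter, abs_of_nonneg hmem.1]
  exact_mod_cast hmem.2

lemma digitPrefix_mem_Icc_of_mem_closedBall {x : ℕ → Fin b} {n : ℕ} {t : ℝ}
    (h : Real.ofDigits x ∈ closedBall t ((b : ℝ) ^ n)⁻¹) :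
    digitPrefix x n ∈ Finset.Icc ⌈b ^ n * t - 2⌉₊ (⌈b ^ n * t - 2⌉₊ + 3) := by
  have hpos : (0 : ℝ) < b ^ n := pow_pos (Nat.cast_pos.2 (Fin.pos (x 0))) n
  obtain ⟨hlo, hhi⟩ := ofDigits_sub_digitPrefix_div_pow_mem_Icc x n
  obtain ⟨hl, hr⟩ := abs_le.1 (Real.dist_eq _ t ▸ mem_closedBall.1 h)
  have hbelow : b ^ n * t - 2 ≤ digitPrefix x n := by
    have : t - 2 * ((b : ℝ) ^ n)⁻¹ ≤ digitPrefix x n / b ^ n := by linarith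
    rw [le_div_iff₀ hpos] at this
    field_simp at this
    linarith
  have habove : (digitPrefix x n : ℝ) ≤ b ^ n * t + 1 := by
    have : digitPrefix x n / b ^ n ≤ t + ((b : ℝ) ^ n)⁻¹ := by linarith
    rw [div_le_iff₀ hpos] at this
    field_simp at this
    linarith
  refine Finset.mem_Icc.2 ⟨Nat.ceil_le.2 hbelow, ?_⟩
  rify
  linarith [Nat.le_ceil ((b : ℝ) ^ n * t - 2)]

end Digits

section DigitMeasure

variable {b : ℕ}

open scoped Classical in
lemma continuous_ofDigits_piecewise (F : Set ℕ) (c : ℕ → Fin b) :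
    Continuous fun ω : ℕ → Fin b ↦ Real.ofDigits (F.piecewise c ω) := by
  refine Real.continuous_ofDigits.comp (continuous_pi fun i ↦ ?_)
  unfold Set.piecewise
  split_ifs <;> fun_prop

variable [NeZero b]

/-- The law of a sequence of independent uniform base-`b` digits. -/
def uniformDigits (b : ℕ) [NeZero b] : Measure (ℕ → Fin b) :=
  Measure.infinitePi fun _ ↦ (PMF.uniformOfFintype (Fin b)).toMeasure

instance : IsProbabilityMeasure (uniformDigits b) := by
  unfold uniformDigits
  infer_instance

open scoped Classical in
/-- The law of the random number in `[0, 1]` whose base-`b` digit at position `i` is `c i` if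
`i ∈ F`, and whose digits at the positions outside `F` are independent and uniform. -/
def digitMeasure (F : Set ℕ) (c : ℕ → Fin b) : Measure ℝ :=
  (uniformDigits b).map fun ω ↦ Real.ofDigits (F.piecewise c ω)

variable (F : Set ℕ) (c : ℕ → Fin b)

instance : IsProbabilityMeasure (digitMeasure F c) :=
  Measure.isProbabilityMeasure_map (continuous_ofDigits_piecewise F c).measurable.aemeasurable

lemma ae_digitMeasure : ∀ᵐ t ∂digitMeasure F c, ∃ x, EqOn x c F ∧ Real.ofDigits x = t := by
  classical
  have hrange := (isCompact_range (continuous_ofDigits_piecewise F c)).measurableSet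
  refine (ae_map_mem_range _ hrange (uniformDigits b)).mono ?_
  rintro _ ⟨ω, rfl⟩
  exact ⟨F.piecewise c ω, F.piecewise_eqOn c ω, rfl⟩

open scoped Classical in
lemma uniformDigits_digitPrefix_piecewise_eq_le (n k : ℕ) :
    uniformDigits b {ω | digitPrefix (F.piecewise c ω) n = k} ≤
      (b : ℝ≥0∞)⁻¹ ^ (Iio n \ F).ncard := by
  rcases eq_empty_or_nonempty {ω | digitPrefix (F.piecewise c ω) n = k} with h | ⟨ω₀, hω₀⟩
  · simp [h]
  have hfin : (Iio n \ F).Finite := (finite_Iio n).sdiff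
  calc uniformDigits b {ω | digitPrefix (F.piecewise c ω) n = k}
      ≤ uniformDigits b (Set.pi hfin.toFinset fun i ↦ {ω₀ i}) := by
        refine measure_mono fun ω hω i hi ↦ ?_
        obtain ⟨hin, hiF⟩ := hfin.mem_toFinset.1 hi
        simpa [hiF] using eq_of_digitPrefix_eq (Eq.trans hω hω₀.symm) i hin
    _ = (b : ℝ≥0∞)⁻¹ ^ (Iio n \ F).ncard := by
        rw [uniformDigits, Measure.infinitePi_pi _ fun i _ ↦ measurableSet_singleton _,
          ncard_eq_toFinset_card _ hfin]
        simp

lemma digitMeasure_closedBall_le (n : ℕ) (t : ℝ) :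
    digitMeasure F c (closedBall t ((b : ℝ) ^ n)⁻¹) ≤
      4 * (b : ℝ≥0∞)⁻¹ ^ (Iio n \ F).ncard := by
  classical
  rw [digitMeasure, Measure.map_apply (continuous_ofDigits_piecewise F c).measurable
    isClosed_closedBall.measurableSet]
  set k := ⌈(b : ℝ) ^ n * t - 2⌉₊
  calc uniformDigits b ((fun ω ↦ Real.ofDigits (F.piecewise c ω)) ⁻¹' closedBall t (b ^ n)⁻¹)
      ≤ uniformDigits b (⋃ l ∈ Finset.Icc k (k + 3),
          {ω | digitPrefix (F.piecewise c ω) n = l}) :=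
        measure_mono fun ω hω ↦
          mem_iUnion₂.2 ⟨_, digitPrefix_mem_Icc_of_mem_closedBall hω, rfl⟩
    _ ≤ ∑ l ∈ Finset.Icc k (k + 3), uniformDigits b {ω | digitPrefix (F.piecewise c ω) n = l} :=
        measure_biUnion_finset_le _ _
    _ ≤ ∑ _l ∈ Finset.Icc k (k + 3), (b : ℝ≥0∞)⁻¹ ^ (Iio n \ F).ncard :=
        Finset.sum_le_sum fun l _ ↦ uniformDigits_digitPrefix_piecewise_eq_le F c n l
    _ = 4 * (b : ℝ≥0∞)⁻¹ ^ (Iio n \ F).ncard := by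
        rw [Finset.sum_const, Nat.card_Icc, nsmul_eq_mul, add_assoc, Nat.add_sub_cancel_left]
        norm_num

end DigitMeasure

lemma digitMeasure_closedBall_le_two_rpow {F : Set ℕ} {c : ℕ → Fin 2} {s L : ℝ} (hs : s ≤ 1)
    (hF : ∀ n : ℕ, s * n - √n - 1 ≤ (Iio n \ F).ncard) (hL : 0 ≤ L) (t : ℝ) :
    digitMeasure F c (closedBall t (2 ^ (-L))) ≤ ENNReal.ofReal (2 ^ (4 + √L - s * L)) := by
  set n := ⌊L⌋₊
  have hnL : (n : ℝ) ≤ L := Nat.floor_le hL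
  have hLn : L < n + 1 := Nat.lt_floor_add_one L
  have hrad : (2 : ℝ) ^ (-L) ≤ (((2 : ℕ) : ℝ) ^ n)⁻¹ := by
    rw [Nat.cast_ofNat, ← Real.rpow_natCast, ← Real.rpow_neg zero_le_two]
    gcongr
    exact one_le_two
  have hexp : 2 - ((Iio n \ F).ncard : ℝ) ≤ 4 + √L - s * L := by
    have hsL : s * L ≤ s * n + 1 := by nlinarith
    linarith [hF n, Real.sqrt_le_sqrt hnL]
  calc digitMeasure F c (closedBall t (2 ^ (-L)))
      ≤ digitMeasure F c (closedBall t (((2 : ℕ) : ℝ) ^ n)⁻¹) :=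
        measure_mono (closedBall_subset_closedBall hrad)
    _ ≤ 4 * ((2 : ℕ) : ℝ≥0∞)⁻¹ ^ (Iio n \ F).ncard := digitMeasure_closedBall_le F c n t
    _ = ENNReal.ofReal (2 ^ (2 - ((Iio n \ F).ncard : ℝ))) := by
        rw [Real.rpow_sub two_pos, Real.rpow_natCast, div_eq_mul_inv, ← inv_pow,
          ENNReal.ofReal_mul (by positivity), ENNReal.ofReal_pow (by positivity),
          ENNReal.ofReal_inv_of_pos two_pos]
        norm_num
    _ ≤ ENNReal.ofReal (2 ^ (4 + √L - s * L)) :=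
        ENNReal.ofReal_le_ofReal (Real.rpow_le_rpow_of_exponent_le one_le_two hexp)

lemma hasBallDecay_digitMeasure {F : Set ℕ} {c : ℕ → Fin 2} {s : ℝ} (hs : s ≤ 1)
    (hF : ∀ n : ℕ, s * n - √n - 1 ≤ (Iio n \ F).ncard) :
    HasBallDecay (digitMeasure F c) s (fun r ↦ 10 * invSqrtLog r) (1 / 2) := by
  intro t r hr hr2
  obtain ⟨L, rfl⟩ : ∃ L : ℝ, r = 2 ^ (-L) :=
    ⟨-Real.logb 2 r, by rw [neg_neg, Real.rpow_logb two_pos one_lt_two.ne' hr]⟩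
  have hL : 1 ≤ L := by
    rw [one_div, ← Real.rpow_neg_one, Real.rpow_lt_rpow_left_iff one_lt_two] at hr2
    linarith
  refine (digitMeasure_closedBall_le_two_rpow hs hF (by linarith) t).trans
    (ENNReal.ofReal_le_ofReal ?_)
  rw [← Real.rpow_mul zero_le_two]
  refine Real.rpow_le_rpow_of_exponent_le one_le_two ?_
  have hgauge := (div_le_iff₀ (by linarith)).1 (four_add_sqrt_div_le_invSqrtLog hL rfl)
  linarith

/-- The positions `a ≤ i ≤ θ a`. A number with binary digits `1000…` along them lies within
`2 ^ (-θ a)` of the centre of its dyadic interval of level `a`. -/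
def digitBlock (θ : ℝ) (a : ℕ) : Set ℕ := {i | a ≤ i ∧ (i : ℝ) ≤ θ * a}

/-- Growth condition on the levels `j p` under which the blocks `digitBlock θ (j q)`, `q < p`, lie
below `√(j p)`. -/
def IsSparse (θ : ℝ) (j : ℕ → ℕ) : Prop := ∀ p, (θ * j p + 1) ^ 2 ≤ j (p + 1)

lemma exists_strictMono_isSparse_comp (θ : ℝ) {j : ℕ → ℕ} (hj : Tendsto j atTop atTop) :
    ∃ φ : ℕ → ℕ, StrictMono φ ∧ IsSparse θ (j ∘ φ) := by
  have hnext (p : ℕ) : ∃ q, p < q ∧ (θ * j p + 1) ^ 2 ≤ j q :=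
    ((eventually_gt_atTop p).and
      ((tendsto_natCast_atTop_atTop.comp hj).eventually_ge_atTop _)).exists
  choose next hlt hsparse using hnext
  refine ⟨fun p ↦ next^[p] 0, strictMono_nat_of_lt_succ fun p ↦ ?_, fun p ↦ ?_⟩
  · rw [Function.iterate_succ_apply']
    exact hlt _
  · rw [Function.comp_apply, Function.comp_apply, Function.iterate_succ_apply']
    exact hsparse _

section Blocks

variable {θ : ℝ} {j : ℕ → ℕ}

lemma self_mem_digitBlock (hθ : 1 ≤ θ) (a : ℕ) : a ∈ digitBlock θ a :=
  ⟨le_rfl, le_mul_of_one_le_left a.cast_nonneg hθ⟩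

lemma ncard_Iio_inter_digitBlock_le (hθ : 1 ≤ θ) (n a : ℕ) :
    ((Iio n ∩ digitBlock θ a).ncard : ℝ) ≤ (1 - 1 / θ) * n + 1 := by
  have hcoef : 0 ≤ 1 - 1 / θ := sub_nonneg.2 (div_le_one_of_le₀ hθ (by linarith))
  rcases (Iio n ∩ digitBlock θ a).eq_empty_or_nonempty with h | hne
  · rw [h, ncard_empty, Nat.cast_zero]
    positivity
  obtain ⟨M, ⟨hMn, haM, hMθ⟩, hmax⟩ :=
    exists_max_image _ id ((finite_Iio n).inter_of_left _) hne
  have hcard : (Iio n ∩ digitBlock θ a).ncard + a ≤ M + 1 := by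
    have hsub : Iio n ∩ digitBlock θ a ⊆ Finset.Icc a M := fun i hi ↦
      Finset.mem_coe.2 (Finset.mem_Icc.2 ⟨hi.2.1, hmax i hi⟩)
    have := ncard_le_ncard hsub (Finset.finite_toSet _)
    rw [ncard_coe_finset, Nat.card_Icc] at this
    omega
  have hMdiv : M * (1 / θ) ≤ a := by
    rw [mul_one_div, div_le_iff₀ (by linarith)]
    linarith
  calc ((Iio n ∩ digitBlock θ a).ncard : ℝ) ≤ M + 1 - a :=
        le_sub_iff_add_le.2 (by exact_mod_cast hcard)
    _ ≤ (1 - 1 / θ) * M + 1 := by linarith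
    _ ≤ (1 - 1 / θ) * n + 1 := by gcongr; exact hMn.le

namespace IsSparse

lemma strictMono (hj : IsSparse θ j) (hθ : 1 ≤ θ) : StrictMono j :=
  strictMono_nat_of_lt_succ fun p ↦ by
    have hp : (0 : ℝ) ≤ j p := Nat.cast_nonneg _
    have hle : (j p : ℝ) ≤ θ * j p := le_mul_of_one_le_left hp hθ
    rify
    nlinarith [hj p]

lemma succ_sq_le (hj : IsSparse θ j) (hθ : 1 ≤ θ) {p q i : ℕ} (hpq : p < q)
    (hi : i ∈ digitBlock θ (j p)) : (i + 1) ^ 2 ≤ j q := by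
  have hnext : (i + 1) ^ 2 ≤ j (p + 1) := by
    rify
    exact (by gcongr; exact hi.2 : ((i : ℝ) + 1) ^ 2 ≤ (θ * j p + 1) ^ 2).trans (hj p)
  exact hnext.trans ((hj.strictMono hθ).monotone hpq)

lemma lt_sqrt_of_mem_digitBlock (hj : IsSparse θ j) (hθ : 1 ≤ θ) {p q i k n : ℕ} (hpq : p < q)
    (hi : i ∈ digitBlock θ (j p)) (hk : k ∈ digitBlock θ (j q)) (hkn : k < n) : i < n.sqrt :=
  Nat.le_sqrt'.2 (((hj.succ_sq_le hθ hpq hi).trans hk.1).trans hkn.le)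

lemma exists_Iio_inter_iUnion_digitBlock_subset (hj : IsSparse θ j) (hθ : 1 ≤ θ) (n : ℕ) :
    ∃ p, Iio n ∩ ⋃ q, digitBlock θ (j q) ⊆ Iio n.sqrt ∪ (Iio n ∩ digitBlock θ (j p)) := by
  by_cases hlarge : ∃ k < n, n.sqrt ≤ k ∧ ∃ p, k ∈ digitBlock θ (j p)
  · obtain ⟨k, hkn, hk, p, hkp⟩ := hlarge
    refine ⟨p, fun i ⟨hin, hi⟩ ↦ ?_⟩
    obtain ⟨q, hiq⟩ := mem_iUnion.1 hi
    rcases lt_trichotomy q p with hqp | rfl | hpq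
    · exact .inl (hj.lt_sqrt_of_mem_digitBlock hθ hqp hiq hkp hkn)
    · exact .inr ⟨hin, hiq⟩
    · exact absurd (hj.lt_sqrt_of_mem_digitBlock hθ hpq hkp hiq hin) hk.not_gt
  · push Not at hlarge
    refine ⟨0, fun i ⟨hin, hi⟩ ↦ .inl (mem_Iio.2 (lt_of_not_ge fun h ↦ ?_))⟩
    obtain ⟨q, hiq⟩ := mem_iUnion.1 hi
    exact hlarge i hin h q hiq

lemma le_ncard_Iio_diff (hj : IsSparse θ j) (hθ : 1 ≤ θ) (n : ℕ) :
    1 / θ * n - √n - 1 ≤ (Iio n \ ⋃ p, digitBlock θ (j p)).ncard := by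
  obtain ⟨p, hsub⟩ := hj.exists_Iio_inter_iUnion_digitBlock_subset hθ n
  have hforced : (Iio n ∩ ⋃ q, digitBlock θ (j q)).ncard ≤
      n.sqrt + (Iio n ∩ digitBlock θ (j p)).ncard := by
    have hfin := (finite_Iio n.sqrt).union ((finite_Iio n).inter_of_left (digitBlock θ (j p)))
    refine (ncard_le_ncard hsub hfin).trans ((ncard_union_le _ _).trans_eq ?_)
    rw [ncard_Iio_nat]
  have htotal := ncard_inter_add_ncard_sdiff_eq_ncard (Iio n) (⋃ q, digitBlock θ (j q))
    (finite_Iio n)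
  rw [ncard_Iio_nat] at htotal
  rify at hforced htotal
  linarith [ncard_Iio_inter_digitBlock_le hθ n (j p), Real.nat_sqrt_le_real_sqrt (a := n)]

end IsSparse

end Blocks

/-- The law of the random number whose binary digits read `1000…` along each block
`digitBlock θ (j p)` and are independent and fair elsewhere. -/
def blockMeasure (θ : ℝ) (j : ℕ → ℕ) : Measure ℝ :=
  digitMeasure (⋃ p, digitBlock θ (j p)) ((range j).indicator 1 : ℕ → Fin 2)

instance (θ : ℝ) (j : ℕ → ℕ) : IsProbabilityMeasure (blockMeasure θ j) := by
  unfold blockMeasure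
  infer_instance

section BlockMeasure

variable {θ : ℝ} {j : ℕ → ℕ}

lemma hasBallDecay_blockMeasure (hj : IsSparse θ j) (hθ : 1 ≤ θ) :
    HasBallDecay (blockMeasure θ j) (1 / θ) (fun r ↦ 10 * invSqrtLog r) (1 / 2) :=
  hasBallDecay_digitMeasure (div_le_one_of_le₀ hθ (by linarith)) (hj.le_ncard_Iio_diff hθ)

lemma abs_ofDigits_sub_center_le_of_eqOn_blocks (hj : IsSparse θ j) (hθ : 1 ≤ θ)
    {x : ℕ → Fin 2} (hx : EqOn x ((range j).indicator 1) (⋃ p, digitBlock θ (j p))) (p : ℕ) :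
    |Real.ofDigits x - (digitPrefix x (j p) + 1 / 2) / 2 ^ j p| ≤ 2 ^ (-(θ * j p)) := by
  have hblock {i : ℕ} (hi : i ∈ digitBlock θ (j p)) : x i = (range j).indicator 1 i :=
    hx (mem_iUnion.2 ⟨p, hi⟩)
  have hone : x (j p) = 1 := by
    rw [hblock (self_mem_digitBlock hθ _), indicator_of_mem (mem_range_self p), Pi.one_apply]
  have hzero (i : ℕ) (hlt : j p < i) (hi : i < ⌊θ * j p⌋₊ + 1) : x i = 0 := by
    have hmem : i ∈ digitBlock θ (j p) :=
      ⟨hlt.le, (Nat.le_floor_iff (by positivity)).1 (Nat.lt_succ_iff.1 hi)⟩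
    rw [hblock hmem, indicator_of_notMem]
    rintro ⟨q, rfl⟩
    have := hj.succ_sq_le hθ ((hj.strictMono hθ).lt_iff_lt.1 hlt) hmem
    nlinarith
  have hlt : j p < ⌊θ * j p⌋₊ + 1 :=
    Nat.lt_succ_iff.2 (Nat.le_floor (self_mem_digitBlock hθ _).2)
  calc |Real.ofDigits x - (digitPrefix x (j p) + 1 / 2) / 2 ^ j p|
      ≤ ((2 : ℝ) ^ (⌊θ * j p⌋₊ + 1))⁻¹ := abs_ofDigits_sub_center_le hlt hone hzero
    _ = 2 ^ (-((⌊θ * j p⌋₊ + 1 : ℕ) : ℝ)) := by rw [Real.rpow_neg zero_le_two, Real.rpow_natCast]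
    _ ≤ 2 ^ (-(θ * j p)) := by
        gcongr
        · exact one_le_two
        · exact_mod_cast (Nat.lt_floor_add_one (θ * j p)).le

lemma pi_blockMeasure_compl_atheta (d : ℕ) (hj : IsSparse θ j) (hθ : 1 ≤ θ) :
    Measure.pi (fun _ : Fin d ↦ blockMeasure θ j) (atheta d θ j)ᶜ = 0 := by
  have hcoord : ∀ᵐ s ∂blockMeasure θ j, ∃ x : ℕ → Fin 2,
      EqOn x ((range j).indicator 1) (⋃ p, digitBlock θ (j p)) ∧ Real.ofDigits x = s :=
    ae_digitMeasure _ _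
  have hdigits : ∀ᵐ t ∂Measure.pi (fun _ : Fin d ↦ blockMeasure θ j), ∀ i, ∃ x : ℕ → Fin 2,
      EqOn x ((range j).indicator 1) (⋃ p, digitBlock θ (j p)) ∧ Real.ofDigits x = t i :=
    ae_all_iff.2 fun _ ↦
      (Measure.tendsto_eval_ae_ae (μ := fun _ ↦ blockMeasure θ j)).eventually hcoord
  refine mem_ae_iff.1 (hdigits.mono fun t ht ↦ ?_)
  choose x hx hxt using ht
  obtain rfl : (fun i ↦ Real.ofDigits (x i)) = t := funext hxt
  refine ⟨⟨fun i ↦ Real.ofDigits_nonneg _, fun i ↦ Real.ofDigits_le_one _⟩,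
    fun p ↦ ⟨p, le_rfl, mem_iUnion.2 ⟨fun i ↦ ⟨_, digitPrefix_lt (x i) (j p)⟩, ?_⟩⟩⟩
  exact mem_closedBall.2 ((dist_pi_le_iff (by positivity)).2 fun i ↦
    abs_ofDigits_sub_center_le_of_eqOn_blocks hj hθ (hx i) p)

end BlockMeasure

lemma atheta_comp_subset (d : ℕ) (θ : ℝ) (j : ℕ → ℕ) {φ : ℕ → ℕ} (hφ : StrictMono φ) :
    atheta d θ (j ∘ φ) ⊆ atheta d θ j := fun _ ⟨hcube, hx⟩ ↦
  ⟨hcube, fun P ↦ let ⟨p, hPp, hp⟩ := hx P; ⟨φ p, hPp.trans hφ.le_apply, hp⟩⟩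

theorem exists_measure_on_atheta_general (d : ℕ) (hd : 1 ≤ d) (θ : ℝ) (hθ : 1 ≤ θ) (j : ℕ → ℕ)
    (hj : Tendsto j atTop atTop) :
    ∃ m : Measure (Fin d → ℝ), IsProbabilityMeasure m ∧ m (atheta d θ j)ᶜ = 0 ∧
      (∀ B : Set (Fin d → ℝ), Bornology.IsBounded B → diam B < 1 / 2 →
        (m B).toReal ≤ diam B ^ ((d : ℝ) / θ - 10 * d * invSqrtLog (diam B))) ∧
      ∀ E : Set (Fin d → ℝ), 0 < m E → ENNReal.ofReal ((d : ℝ) / θ) ≤ dimH E := by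
  obtain ⟨φ, hφ, hsparse⟩ := exists_strictMono_isSparse_comp θ hj
  have hdecay : HasBallDecay (Measure.pi fun _ : Fin d ↦ blockMeasure θ (j ∘ φ)) (d / θ)
      (fun r ↦ 10 * d * invSqrtLog r) (1 / 2) := by
    convert HasBallDecay.pi fun _ : Fin d ↦ hasBallDecay_blockMeasure hsparse hθ using 1
    · simp [div_eq_mul_inv]
    · ext r
      simp only [Finset.sum_const, Finset.card_univ, Fintype.card_fin, nsmul_eq_mul]
      ring
  have hgauge : Tendsto (fun r ↦ 10 * d * invSqrtLog r) (𝓝[>] 0) (𝓝 0) := by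
    simpa using tendsto_invSqrtLog_nhdsGT_zero.const_mul (10 * (d : ℝ))
  have hdim : 0 < (d : ℝ) / θ := by positivity
  exact ⟨_, inferInstance,
    measure_mono_null (compl_subset_compl.2 (atheta_comp_subset d θ j hφ))
      (pi_blockMeasure_compl_atheta d hsparse hθ),
    fun B hB hdiam ↦ ENNReal.toReal_le_of_le_ofReal (Real.rpow_nonneg diam_nonneg _)
      (hdecay.measure_le_rpow_diam one_half_pos hgauge hdim hB hdiam),
    fun E hE ↦ hdecay.ofReal_le_dimH one_half_pos hgauge hdim hE⟩

/-- For every `θ > 1` there exist a strictly increasing sequence `(j_p)` of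
positive integers, a Borel probability measure `m` on `[0,1]^d` concentrated on `A_θ`, a
continuous increasing gauge `ψ` with `ψ(0) = 0` and `η > 0` such that
`m(B) ≤ |B|^{d/θ - ψ(|B|)}` for every Borel set `B ⊆ [0,1]^d` of diameter `< η`.
Consequently every Borel set `E` with `m(E) > 0` satisfies `dim_H E ≥ d/θ`. -/
theorem exists_measure_on_atheta (d : ℕ) (hd : 1 ≤ d) (θ : ℝ) (hθ : 1 < θ) :
    ∃ j : ℕ → ℕ, StrictMono j ∧ (∀ p, 1 ≤ j p) ∧
    ∃ m : Measure (Fin d → ℝ), IsProbabilityMeasure m ∧ m (atheta d θ j)ᶜ = 0 ∧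
    ∃ ψ : ℝ → ℝ, ContinuousOn ψ (Set.Ici 0) ∧ StrictMonoOn ψ (Set.Ici 0) ∧ ψ 0 = 0 ∧
    ∃ η : ℝ, 0 < η ∧
      (∀ B : Set (Fin d → ℝ), B ⊆ Set.Icc 0 1 → MeasurableSet B → Metric.diam B < η →
        (m B).toReal ≤ Metric.diam B ^ ((d : ℝ) / θ - ψ (Metric.diam B))) ∧
      (∀ E : Set (Fin d → ℝ), MeasurableSet E → 0 < m E →
        ENNReal.ofReal ((d : ℝ) / θ) ≤ dimH E) := by
  obtain ⟨m, hm, hA, hball, hdim⟩ :=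
    exists_measure_on_atheta_general d hd θ hθ.le (· + 1) (tendsto_add_atTop_nat 1)
  exact ⟨(· + 1), strictMono_id.add_const 1, fun p ↦ Nat.le_add_left 1 p, m, hm, hA,
    fun r ↦ 10 * d * invSqrtLog r, continuousOn_invSqrtLog.const_mul _,
    fun r hr s hs hrs ↦
      mul_lt_mul_of_pos_left (strictMonoOn_invSqrtLog hr hs hrs) (by positivity),
    by simp [invSqrtLog_zero], 1 / 2, one_half_pos,
    fun B hB _ hdiam ↦ hball B ((isBounded_Icc 0 1).subset hB) hdiam, fun E _ ↦ hdim E⟩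
end
end
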